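/- arXiv:0811.1416 — 3 statements merged into one kernel-verified Lean document; each statement's English description precedes it below -/
import Mathlib

section
/- Let x₀, y₀ ∈ S^d with (x₀,y₀) = 0, and define G″ ∈ P_n by G″(y) = (y₀,y)²·g_w″((x₀,y)) − (x₀,y)·g_w′((x₀,y)); G″ is the second derivative at t = 0 of the curve t ↦ G_{x(t)} with x(t) = x₀·cos t + y₀·sin t. Then ⟨G″, G″⟩_w = 3·g_w″(1) + g_w′(1). -/
open MeasureTheory Finset
open scoped RealInnerProductSpace

noncomputable section
attribute [local instance] Classical.propDecidable

/-- Euclidean space `ℝ^{d+1}`. -/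
abbrev Euc (d : ℕ) := EuclideanSpace ℝ (Fin (d + 1))

/-- The unit sphere `S^d ⊆ ℝ^{d+1}`. -/
abbrev Sph (d : ℕ) := Metric.sphere (0 : Euc d) 1

/-- Real-valued functions on the sphere. -/
abbrev SphFun (d : ℕ) := Sph d → ℝ

/-- The normalized surface measure `μ_d` on `S^d`. -/
noncomputable def muSph (d : ℕ) : Measure (Sph d) :=
  ((volume : Measure (Euc d)).toSphere Set.univ)⁻¹ • (volume : Measure (Euc d)).toSphere

/-- Gegenbauer polynomials `C_k^α`, normalized so that `C_k^α(1) = binom(2α+k-1, k)`,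
defined by the standard three-term recurrence. -/
noncomputable def gegenbauer (α : ℝ) : ℕ → Polynomial ℝ
  | 0 => 1
  | 1 => Polynomial.C (2 * α) * Polynomial.X
  | n + 2 =>
      Polynomial.C (2 * ((n : ℝ) + 1 + α) / ((n : ℝ) + 2)) *
          (Polynomial.X * gegenbauer α (n + 1)) -
        Polynomial.C (((n : ℝ) + 2 * α) / ((n : ℝ) + 2)) * gegenbauer α n

/-- `dim H_k = ((2k+d-1)/(k+d-1))·binom(d+k-1, k)`. -/
noncomputable def dimHarm (d k : ℕ) : ℝ :=
  ((2 * (k : ℝ) + d - 1) / ((k : ℝ) + d - 1)) * (Nat.choose (d + k - 1) k : ℝ)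

/-- The kernel polynomial `g_w(t) = Σ_{k=1}^n dim H_k / (w_k G_k^α(1)) · G_k^α(t)`,
with `α = (d-1)/2` and `w_k = k(k+d-1)`. -/
noncomputable def gw (d n : ℕ) : Polynomial ℝ :=
  ∑ k ∈ Finset.Icc 1 n,
    Polynomial.C (dimHarm d k /
        (((k : ℝ) * ((k : ℝ) + d - 1)) * (gegenbauer (((d : ℝ) - 1) / 2) k).eval 1)) *
      gegenbauer (((d : ℝ) - 1) / 2) k

/-- The Laplace operator on polynomials in `d+1` variables. -/
noncomputable def polyLaplacian (d : ℕ) (p : MvPolynomial (Fin (d + 1)) ℝ) :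
    MvPolynomial (Fin (d + 1)) ℝ :=
  ∑ i : Fin (d + 1), MvPolynomial.pderiv i (MvPolynomial.pderiv i p)

/-- The space `H_k` of spherical harmonics of degree `k` on `S^d`: restrictions to the
sphere of harmonic homogeneous polynomials of degree `k`. -/
def sphHarmonic (d k : ℕ) : Set (SphFun d) :=
  {f | ∃ p : MvPolynomial (Fin (d + 1)) ℝ, p.IsHomogeneous k ∧ polyLaplacian d p = 0 ∧
        ∀ x : Sph d, f x = MvPolynomial.eval (fun i => (x : Euc d) i) p}

/-- The space `P_n`: restrictions to `S^d` of polynomials of total degree at most `n`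
having zero mean over the sphere. -/
def PolySph (d n : ℕ) : Set (SphFun d) :=
  {f | ∃ p : MvPolynomial (Fin (d + 1)) ℝ, p.totalDegree ≤ n ∧
        (∀ x : Sph d, f x = MvPolynomial.eval (fun i => (x : Euc d) i) p) ∧
        ∫ x, f x ∂muSph d = 0}

/-- The `H_k`-component of `P ∈ P_n` in the decomposition `P_n = ⊕_{k=1}^n H_k`
(the decomposition is unique; an arbitrary one is chosen if it exists). -/
noncomputable def harmComponent (d n : ℕ) (P : SphFun d) (k : ℕ) : SphFun d :=
  if h : ∃ c : ℕ → SphFun d, (∀ j, c j ∈ sphHarmonic d j) ∧ P = ∑ j ∈ Finset.Icc 1 n, c j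
  then h.choose k else 0

/-- The inner product `⟨P,Q⟩_w = Σ_{k=1}^n w_k ∫ P_k Q_k dμ_d` with `w_k = k(k+d-1)`. -/
noncomputable def innerW (d n : ℕ) (P Q : SphFun d) : ℝ :=
  ∑ k ∈ Finset.Icc 1 n, ((k : ℝ) * ((k : ℝ) + d - 1)) *
    ∫ x, harmComponent d n P k x * harmComponent d n Q k x ∂muSph d

/-- The norm `‖P‖_w = ⟨P,P⟩_w^{1/2}`. -/
noncomputable def normW (d n : ℕ) (P : SphFun d) : ℝ :=
  Real.sqrt (innerW d n P P)

/-- The function `G_x(y) = g_w((x,y))` on the sphere, for `x ∈ ℝ^{d+1}`. -/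
noncomputable def GxFun (d n : ℕ) (x : Euc d) : SphFun d :=
  fun y => (gw d n).eval ⟪x, (y : Euc d)⟫

/-- The extension of a function on the sphere to `ℝ^{d+1} \ {0}` by `x ↦ f(x/‖x‖)`
(with value `0` at the origin). -/
noncomputable def extendSph (d : ℕ) (f : SphFun d) : Euc d → ℝ :=
  fun x =>
    if hx : x = 0 then 0
    else f ⟨‖x‖⁻¹ • x, by
      rw [mem_sphere_zero_iff_norm, norm_smul, norm_inv, norm_norm,
        inv_mul_cancel₀ (norm_ne_zero_iff.mpr hx)]⟩

/-- The spherical gradient `∇f(x) = (∂/∂x) f(x/‖x‖)`. -/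
noncomputable def sphGrad (d : ℕ) (f : SphFun d) (x : Euc d) : Euc d :=
  gradient (extendSph d f) x

/-- The spherical Hessian quadratic form `∇²f(x)·y·y`. -/
noncomputable def sphHessApply (d : ℕ) (f : SphFun d) (x y : Euc d) : ℝ :=
  iteratedFDeriv ℝ 2 (extendSph d f) x ![y, y]

/-- `‖∇²f(x₀)‖ = max { |∇²f(x₀)·y·y| : ‖y‖ = 1, (y,x₀) = 0 }`. -/
noncomputable def sphHessNorm (d : ℕ) (f : SphFun d) (x₀ : Sph d) : ℝ :=
  sSup {r : ℝ | ∃ y : Euc d, ‖y‖ = 1 ∧ ⟪y, (x₀ : Euc d)⟫ = 0 ∧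
    r = |sphHessApply d f (x₀ : Euc d) y|}

/-- `x_1, …, x_N ∈ S^d` form a spherical `n`-design. -/
def IsSphericalDesign (d n N : ℕ) (x : Fin N → Sph d) : Prop :=
  ∀ p : MvPolynomial (Fin (d + 1)) ℝ, p.totalDegree ≤ n →
    ∫ y, MvPolynomial.eval (fun j => (y : Euc d) j) p ∂muSph d =
      (N : ℝ)⁻¹ * ∑ i, MvPolynomial.eval (fun j => ((x i : Euc d)) j) p

/-- An area-regular partition `R_1, …, R_N` of `S^d`: closed sets with pairwise disjoint
interiors, covering the sphere, each of normalized measure `1/N`. -/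
def IsAreaRegularPartition (d N : ℕ) (R : Fin N → Set (Sph d)) : Prop :=
  (∀ i, IsClosed (R i)) ∧ (⋃ i, R i) = Set.univ ∧
    (∀ i j, i ≠ j → interior (R i) ∩ interior (R j) = ∅) ∧
    ∀ i, muSph d (R i) = 1 / N

/-- The Marcinkiewicz–Zygmund property of degree `m` for points `x_1, …, x_N ∈ S^d`. -/
def MZProperty (d m N : ℕ) (x : Fin N → Sph d) : Prop :=
  ∀ p : MvPolynomial (Fin (d + 1)) ℝ, p.totalDegree ≤ m →
    (1 / 2) * (∫ y, |MvPolynomial.eval (fun j => (y : Euc d) j) p| ∂muSph d) ≤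
        (N : ℝ)⁻¹ * ∑ i, |MvPolynomial.eval (fun j => ((x i : Euc d)) j) p| ∧
      (N : ℝ)⁻¹ * ∑ i, |MvPolynomial.eval (fun j => ((x i : Euc d)) j) p| ≤
        (3 / 2) * ∫ y, |MvPolynomial.eval (fun j => (y : Euc d) j) p| ∂muSph d

/-- The point `x_i(P)`: move `x` along the great circle in the direction of the spherical
gradient `∇P(x)` through angle `‖∇P(x)‖`. -/
noncomputable def movePoint (d : ℕ) (P : SphFun d) (x : Sph d) : Euc d :=
  if _h : sphGrad d P (x : Euc d) = 0 then (x : Euc d)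
  else Real.cos ‖sphGrad d P (x : Euc d)‖ • (x : Euc d) +
    Real.sin ‖sphGrad d P (x : Euc d)‖ • (‖sphGrad d P (x : Euc d)‖⁻¹ • sphGrad d P (x : Euc d))

/-- The map `L(P) = (1/N) Σ_i G_{x_i(P)}`. -/
noncomputable def Lmap (d n N : ℕ) (x : Fin N → Sph d) (P : SphFun d) : SphFun d :=
  (N : ℝ)⁻¹ • ∑ i, GxFun d n (movePoint d P (x i))

end


section Aux

open MvPolynomial (pderiv)

abbrev MP (d : ℕ) := MvPolynomial (Fin (d + 1)) ℝ

noncomputable def evS {d : ℕ} (p : MP d) (y : Sph d) : ℝ :=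
  MvPolynomial.eval (fun i => (y : Euc d) i) p

noncomputable def IS {d : ℕ} (p : MP d) : ℝ := ∫ y, evS p y ∂muSph d

instance muSph_prob (d : ℕ) : IsProbabilityMeasure (muSph d) := by
  constructor
  rw [muSph, Measure.smul_apply, smul_eq_mul]
  apply ENNReal.inv_mul_cancel
  · rw [Ne, Measure.measure_univ_eq_zero]
    exact Measure.toSphere_ne_zero _
  · exact measure_ne_top _ _

lemma evS_cont {d : ℕ} (p : MP d) : Continuous (evS p) := by
  unfold evS
  have h : Continuous fun y : Sph d => (fun i => (y : Euc d) i : Fin (d+1) → ℝ) := by fun_prop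
  exact (MvPolynomial.continuous_eval p).comp h

lemma cont_int {d : ℕ} {f : Sph d → ℝ} (hf : Continuous f) : Integrable f (muSph d) := by
  exact hf.integrable_of_hasCompactSupport (HasCompactSupport.of_compactSpace _)

lemma evS_int {d : ℕ} (p : MP d) : Integrable (evS p) (muSph d) := cont_int (evS_cont p)

lemma IS_add {d : ℕ} (p q : MP d) : IS (p + q) = IS p + IS q := by
  unfold IS
  rw [← integral_add (evS_int p) (evS_int q)]
  simp [evS]

lemma IS_Cmul {d : ℕ} (c : ℝ) (p : MP d) : IS (MvPolynomial.C c * p) = c * IS p := by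
  unfold IS
  rw [← integral_const_mul]
  simp [evS]

noncomputable def ISl (d : ℕ) : MP d →ₗ[ℝ] ℝ where
  toFun := IS
  map_add' := IS_add
  map_smul' c p := by rw [MvPolynomial.smul_eq_C_mul, IS_Cmul]; rfl

lemma ISl_apply {d : ℕ} (p : MP d) : ISl d p = IS p := rfl

lemma ISl_C {d : ℕ} (c : ℝ) : ISl d (MvPolynomial.C c) = c := by
  simp [ISl_apply, IS, evS]

noncomputable def Rad (d : ℕ) : MP d := ∑ i, MvPolynomial.X i ^ 2

lemma evS_Rad {d : ℕ} (y : Sph d) : evS (Rad d) y = 1 := by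
  have h : ‖(y : Euc d)‖ = 1 := by simp
  rw [EuclideanSpace.norm_eq, Real.sqrt_eq_one] at h
  simpa [evS, Rad] using h

lemma ISl_Rad {d : ℕ} (p : MP d) : ISl d (Rad d * p) = ISl d p := by
  simp only [ISl_apply, IS]
  congr 1
  ext y
  have := evS_Rad y
  simp only [evS, map_mul] at *
  rw [this, one_mul]

/-- linear form -/
noncomputable def lf {d : ℕ} (a : Euc d) : MP d := ∑ i, MvPolynomial.C (a i) * MvPolynomial.X i

/-- directional derivative -/
noncomputable def Dd {d : ℕ} (a : Euc d) : Derivation ℝ (MP d) (MP d) :=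
  ∑ i, a i • pderiv i

lemma Dd_apply {d : ℕ} (a : Euc d) (p : MP d) :
    Dd a p = ∑ i, MvPolynomial.C (a i) * pderiv i p := by
  have : ∀ (s : Finset (Fin (d+1))), (∑ i ∈ s, a i • (pderiv i : Derivation ℝ (MP d) (MP d))) p
      = ∑ i ∈ s, MvPolynomial.C (a i) * pderiv i p := by
    intro s
    induction s using Finset.induction_on with
    | empty => simp
    | insert i s hi ih => rw [Finset.sum_insert hi, Finset.sum_insert hi, Derivation.add_apply, ih,
        Derivation.smul_apply, MvPolynomial.smul_eq_C_mul]
  exact this _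

lemma inner_eq {d : ℕ} (a b : Euc d) : ⟪a, b⟫ = ∑ i, a i * b i := by
  simp [PiLp.inner_apply, mul_comm]

lemma eval_lf {d : ℕ} (a : Euc d) (v : Euc d) :
    MvPolynomial.eval (fun i => v i) (lf a) = ⟪a, v⟫ := by
  simp [lf, inner_eq]

lemma evS_lf {d : ℕ} (a : Euc d) (y : Sph d) : evS (lf a) y = ⟪a, (y : Euc d)⟫ := eval_lf _ _

/-- rotation generator -/
noncomputable def Lr {d : ℕ} (a b : Euc d) : Derivation ℝ (MP d) (MP d) :=
  lf a • Dd b - lf b • Dd a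

lemma Lr_apply {d : ℕ} (a b : Euc d) (p : MP d) : Lr a b p = lf a * Dd b p - lf b * Dd a p := by
  simp [Lr]

lemma hasDerivAt_evalMv {d : ℕ} (p : MP d) (γ : ℝ → Fin (d+1) → ℝ) (γ' : Fin (d+1) → ℝ) (t : ℝ)
    (h : ∀ i, HasDerivAt (fun t => γ t i) (γ' i) t) :
    HasDerivAt (fun t => MvPolynomial.eval (γ t) p)
      (∑ i, γ' i * MvPolynomial.eval (γ t) (pderiv i p)) t := by
  induction p using MvPolynomial.induction_on with
  | C c => simpa using hasDerivAt_const t c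
  | add p q hp hq =>
    simp only [map_add, mul_add, Finset.sum_add_distrib]
    exact hp.fun_add hq
  | mul_X p j hp =>
    have h2 := hp.fun_mul (h j)
    have h3 : ∑ i, γ' i * MvPolynomial.eval (γ t) (pderiv i (p * MvPolynomial.X j)) =
        (∑ i, γ' i * MvPolynomial.eval (γ t) (pderiv i p)) * γ t j
          + MvPolynomial.eval (γ t) p * γ' j := by
      simp only [Derivation.leibniz, MvPolynomial.pderiv_X, smul_eq_mul, map_add, map_mul,
        MvPolynomial.eval_X, mul_add, Finset.sum_add_distrib]
      rw [add_comm]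
      congr 1
      · rw [Finset.sum_mul]; refine Finset.sum_congr rfl fun i _ => by ring
      · rw [Finset.sum_eq_single j]
        · simp [mul_comm]
        · intro b _ hb; simp [Pi.single_apply, hb.symm]
        · simp
    rw [h3]
    simp only [map_mul, MvPolynomial.eval_X]
    exact h2

noncomputable def rotv {d : ℕ} (a b : Euc d) (t : ℝ) (y : Euc d) : Euc d :=
  y + (Real.cos t - 1) • (⟪a, y⟫ • a + ⟪b, y⟫ • b) + Real.sin t • (⟪a, y⟫ • b - ⟪b, y⟫ • a)

noncomputable def rotl {d : ℕ} (a b : Euc d) (ha : ‖a‖ = 1) (hb : ‖b‖ = 1) (hab : ⟪a, b⟫ = 0)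
    (t : ℝ) : Euc d ≃ₗᵢ[ℝ] Euc d :=
  LinearIsometry.toLinearIsometryEquiv
    { toFun := rotv a b t
      map_add' := by intro x y; simp only [rotv, inner_add_right]; module
      map_smul' := by intro c x; simp only [rotv, inner_smul_right, RingHom.id_apply]; module
      norm_map' := by
        intro x
        change ‖rotv a b t x‖ = ‖x‖
        rw [← sq_eq_sq₀ (norm_nonneg _) (norm_nonneg _), ← real_inner_self_eq_norm_sq,
          ← real_inner_self_eq_norm_sq]
        have haa : ⟪a, a⟫ = 1 := by rw [real_inner_self_eq_norm_sq, ha]; norm_num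
        have hbb : ⟪b, b⟫ = 1 := by rw [real_inner_self_eq_norm_sq, hb]; norm_num
        have hba : ⟪b, a⟫ = 0 := by rw [real_inner_comm]; exact hab
        have h := Real.sin_sq_add_cos_sq t
        simp only [rotv, inner_add_left, inner_add_right, inner_sub_left, inner_sub_right,
          real_inner_smul_left, real_inner_smul_right, haa, hbb, hab, hba,
          real_inner_comm a x, real_inner_comm b x]
        linear_combination (⟪a, x⟫^2 + ⟪b, x⟫^2) * h } rfl

lemma rotl_apply {d : ℕ} (a b : Euc d) (ha : ‖a‖ = 1) (hb : ‖b‖ = 1) (hab : ⟪a, b⟫ = 0)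
    (t : ℝ) (y : Euc d) : rotl a b ha hb hab t y = rotv a b t y := rfl

noncomputable def sphMap {d : ℕ} (e : Euc d ≃ₗᵢ[ℝ] Euc d) (y : Sph d) : Sph d :=
  ⟨e y, by simp⟩

lemma sphMap_cont {d : ℕ} (e : Euc d ≃ₗᵢ[ℝ] Euc d) : Continuous (sphMap e) := by
  unfold sphMap
  exact Continuous.subtype_mk (e.continuous.comp continuous_subtype_val) _

open Pointwise in
lemma sphMap_mp {d : ℕ} (e : Euc d ≃ₗᵢ[ℝ] Euc d) :
    MeasurePreserving (sphMap e) (muSph d) (muSph d) := by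
  refine ⟨(sphMap_cont e).measurable, ?_⟩
  unfold muSph
  rw [Measure.map_smul]
  congr 1
  ext s hs
  rw [Measure.map_apply (sphMap_cont e).measurable hs, Measure.toSphere_apply' _ hs,
    Measure.toSphere_apply' _ ((sphMap_cont e).measurable hs)]
  congr 1
  have : (Set.Ioo (0:ℝ) 1 • ((↑) '' (sphMap e ⁻¹' s)) : Set (Euc d))
      = e ⁻¹' (Set.Ioo (0:ℝ) 1 • ((↑) '' s)) := by
    ext z
    simp only [Set.mem_smul, Set.mem_image, Set.mem_preimage]
    constructor
    · rintro ⟨r, hr, _, ⟨y, hy, rfl⟩, rfl⟩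
      exact ⟨r, hr, _, ⟨_, hy, rfl⟩, by simp [sphMap]⟩
    · rintro ⟨r, hr, _, ⟨y, hy, rfl⟩, h⟩
      refine ⟨r, hr, _, ⟨sphMap e.symm y, ?_, rfl⟩, ?_⟩
      · convert hy; ext; simp [sphMap]
      · apply e.injective
        simp [sphMap, h]
  rw [this]
  exact e.measurePreserving.measure_preimage_equiv (f := e.toMeasurableEquiv) _

lemma IS_Lr {d : ℕ} (a b : Euc d) (ha : ‖a‖ = 1) (hb : ‖b‖ = 1) (hab : ⟪a, b⟫ = 0)
    (p : MP d) : ISl d (Lr a b p) = 0 := by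
  set R := fun t => rotl a b ha hb hab t
  obtain ⟨C, hC⟩ := isCompact_univ.exists_bound_of_continuousOn (evS_cont (Lr a b p)).continuousOn
  have key := (hasDerivAt_integral_of_dominated_loc_of_deriv_le (μ := muSph d) (x₀ := (0:ℝ))
    (s := Set.univ) (F := fun t y => evS p (sphMap (R t) y))
    (F' := fun t y => evS (Lr a b p) (sphMap (R t) y)) (bound := fun _ => C)
    Filter.univ_mem (Filter.Eventually.of_forall fun t =>
      (cont_int ((evS_cont p).comp (sphMap_cont (R t)))).aestronglyMeasurable)
    (cont_int ((evS_cont p).comp (sphMap_cont (R 0))))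
    (cont_int ((evS_cont _).comp (sphMap_cont (R 0)))).aestronglyMeasurable
    (Filter.Eventually.of_forall fun y t _ => hC _ (Set.mem_univ _))
    (integrable_const _)
    (Filter.Eventually.of_forall fun y t _ => ?_)).2
  · have h1 : ∀ (q : MP d) t, ∫ y, evS q (sphMap (R t) y) ∂muSph d = IS q := by
      intro q t
      have := integral_map (μ := muSph d) (sphMap_mp (R t)).measurable.aemeasurable
        (f := evS q) ((evS_cont q).aestronglyMeasurable)
      rw [(sphMap_mp (R t)).map_eq] at this
      exact this.symm
    simp only [h1] at key
    exact key.unique (hasDerivAt_const _ _)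
  · have h0 := hasDerivAt_evalMv p (fun t i => rotv a b t y i)
      (fun i => (⟪a, rotv a b t y⟫ * b i - ⟪b, rotv a b t y⟫ * a i)) t (by
        intro i
        have haa : ⟪a, a⟫ = 1 := by rw [real_inner_self_eq_norm_sq, ha]; norm_num
        have hbb : ⟪b, b⟫ = 1 := by rw [real_inner_self_eq_norm_sq, hb]; norm_num
        have hba : ⟪b, a⟫ = 0 := by rw [real_inner_comm]; exact hab
        simp only [rotv, inner_add_right, inner_sub_right, real_inner_smul_right, haa, hbb, hab,
          hba, PiLp.add_apply, PiLp.sub_apply, PiLp.smul_apply, smul_eq_mul]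
        have := ((((Real.hasDerivAt_cos t).sub_const 1).mul_const
          (⟪a, (y:Euc d)⟫ * a i + ⟪b, (y:Euc d)⟫ * b i)).const_add ((y:Euc d) i)).add
          ((Real.hasDerivAt_sin t).mul_const (⟪a, (y:Euc d)⟫ * b i - ⟪b, (y:Euc d)⟫ * a i))
        refine (this.congr_deriv ?_)
        ring)
    refine HasDerivAt.congr_deriv h0 ?_
    have : sphMap (R t) y = rotv a b t (y : Euc d) := rfl
    symm
    simp only [evS, this, Lr_apply, map_sub, map_mul, eval_lf, Dd_apply, map_sum,
      MvPolynomial.eval_C, Finset.mul_sum, ← Finset.sum_sub_distrib]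
    refine Finset.sum_congr rfl fun i _ => by ring

lemma pderiv_comm' {d : ℕ} (i j : Fin (d+1)) (p : MP d) :
    pderiv i (pderiv j p) = pderiv j (pderiv i p) := by
  induction p using MvPolynomial.induction_on with
  | C c => simp
  | add p q hp hq => simp [hp, hq]
  | mul_X p k hp =>
    have h1 : ∀ a b c : Fin (d+1), pderiv a ((Pi.single b 1 : Fin (d+1) → MP d) c) = 0 := by
      intro a b c
      rw [Pi.single_apply]; split_ifs <;> simp
    simp only [Derivation.leibniz, MvPolynomial.pderiv_X, smul_eq_mul, map_add, hp, h1]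
    ring

lemma lf_single {d : ℕ} (i : Fin (d+1)) :
    lf (EuclideanSpace.single i (1:ℝ)) = (MvPolynomial.X i : MP d) := by
  rw [lf, Finset.sum_eq_single i]
  · simp
  · intro b _ hb; simp [hb]
  · simp

lemma Dd_single {d : ℕ} (i : Fin (d+1)) (p : MP d) :
    Dd (EuclideanSpace.single i (1:ℝ)) p = pderiv i p := by
  rw [Dd_apply, Finset.sum_eq_single i]
  · simp
  · intro b _ hb; simp [hb]
  · simp

lemma inner_single1 {d : ℕ} (i : Fin (d+1)) (a : Euc d) :
    ⟪(EuclideanSpace.single i (1:ℝ) : Euc d), a⟫ = a i := by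
  rw [inner_eq, Finset.sum_eq_single i]
  · simp
  · intro b _ hb; simp [hb]
  · simp

lemma IS_Lij {d : ℕ} (i j : Fin (d+1)) (p : MP d) :
    ISl d (MvPolynomial.X j * pderiv i p - MvPolynomial.X i * pderiv j p) = 0 := by
  by_cases h : i = j
  · subst h; simp
  · have := IS_Lr (EuclideanSpace.single j (1:ℝ)) (EuclideanSpace.single i (1:ℝ)) (by simp)
      (by simp) (by rw [inner_single1]; simp [h]) p
    rwa [Lr_apply, lf_single, lf_single, Dd_single, Dd_single] at this

lemma star_coord {d m : ℕ} (i : Fin (d+1)) (p : MP d) (hp : p.IsHomogeneous m) :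
    ISl d (pderiv i p) = ((m:ℝ) + d) * ISl d (MvPolynomial.X i * p) := by
  have h0 : ISl d (∑ j, (MvPolynomial.X j * pderiv i (MvPolynomial.X j * p)
      - MvPolynomial.X i * pderiv j (MvPolynomial.X j * p))) = 0 := by
    rw [map_sum]
    exact Finset.sum_eq_zero fun j _ => IS_Lij i j _
  have h1 : (∑ j, (MvPolynomial.X j * pderiv i (MvPolynomial.X j * p)
      - MvPolynomial.X i * pderiv j (MvPolynomial.X j * p)))
      = Rad d * pderiv i p - ((m:ℝ) + d) • (MvPolynomial.X i * p) := by
    have e := hp.sum_X_mul_pderiv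
    have : ∀ j, (MvPolynomial.X j * pderiv i (MvPolynomial.X j * p)
      - MvPolynomial.X i * pderiv j (MvPolynomial.X j * p))
      = MvPolynomial.X j ^ 2 * pderiv i p + MvPolynomial.X j * p * (Pi.single i 1 : Fin (d+1) → MP d) j
        - MvPolynomial.X i * p - MvPolynomial.X i * (MvPolynomial.X j * pderiv j p) := by
      intro j
      simp only [Derivation.leibniz, MvPolynomial.pderiv_X, smul_eq_mul, Pi.single_eq_same]
      ring
    simp only [this, Finset.sum_sub_distrib, Finset.sum_add_distrib, ← Finset.mul_sum,
      ← Finset.sum_mul, e]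
    have h3 : ∑ j, MvPolynomial.X j * p * (Pi.single i 1 : Fin (d+1) → MP d) j
        = MvPolynomial.X i * p := by
      rw [Finset.sum_eq_single i]
      · simp
      · intro b _ hb; simp [Pi.single_apply, hb]
      · simp
    rw [h3, MvPolynomial.smul_eq_C_mul]
    simp [Rad]
    ring
  rw [h1, map_sub, ISl_Rad, map_smul, smul_eq_mul] at h0
  linarith

lemma star {d m : ℕ} (a : Euc d) (p : MP d) (hp : p.IsHomogeneous m) :
    ISl d (Dd a p) = ((m:ℝ) + d) * ISl d (lf a * p) := by
  rw [Dd_apply, lf, Finset.sum_mul, map_sum, map_sum, Finset.mul_sum]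
  refine Finset.sum_congr rfl fun i _ => ?_
  rw [mul_assoc, ISl_apply, ISl_apply, IS_Cmul, IS_Cmul, ← ISl_apply, ← ISl_apply,
    star_coord i p hp]
  ring

lemma Dd_C {d : ℕ} (a : Euc d) (c : ℝ) : Dd a (MvPolynomial.C c) = 0 := by simp [Dd_apply]

lemma Dd_lf {d : ℕ} (a b : Euc d) : Dd a (lf b) = MvPolynomial.C ⟪a, b⟫ := by
  rw [Dd_apply, inner_eq, map_sum]
  refine Finset.sum_congr rfl fun i _ => ?_
  rw [map_mul, lf, map_sum, Finset.sum_eq_single i]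
  · simp
  · intro j _ hj; simp [hj]
  · simp

lemma Dd_Rad {d : ℕ} (a : Euc d) : Dd a (Rad d) = 2 * lf a := by
  rw [Dd_apply, lf, Finset.mul_sum]
  refine Finset.sum_congr rfl fun i _ => ?_
  rw [Rad, map_sum, Finset.sum_eq_single i]
  · simp [MvPolynomial.pderiv_pow]; ring
  · intro j _ hj; simp [MvPolynomial.pderiv_pow, hj]
  · simp

lemma Dd_comm {d : ℕ} (a b : Euc d) (p : MP d) : Dd a (Dd b p) = Dd b (Dd a p) := by
  simp only [Dd_apply, map_sum, MvPolynomial.pderiv_C_mul, Finset.mul_sum]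
  rw [Finset.sum_comm]
  refine Finset.sum_congr rfl fun i _ => Finset.sum_congr rfl fun j _ => ?_
  rw [pderiv_comm']; ring

lemma lap_add {d : ℕ} (p q : MP d) : polyLaplacian d (p + q)
    = polyLaplacian d p + polyLaplacian d q := by
  simp [polyLaplacian, Finset.sum_add_distrib]

lemma lap_sub {d : ℕ} (p q : MP d) : polyLaplacian d (p - q)
    = polyLaplacian d p - polyLaplacian d q := by
  simp [polyLaplacian, Finset.sum_sub_distrib]

lemma lap_C {d : ℕ} (c : ℝ) : polyLaplacian d (MvPolynomial.C c) = 0 := by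
  simp [polyLaplacian]

lemma lap_Cmul {d : ℕ} (c : ℝ) (p : MP d) : polyLaplacian d (MvPolynomial.C c * p)
    = MvPolynomial.C c * polyLaplacian d p := by
  simp [polyLaplacian, MvPolynomial.pderiv_C_mul, Finset.mul_sum]

lemma lap_pderiv {d : ℕ} (i : Fin (d+1)) (p : MP d) :
    polyLaplacian d (pderiv i p) = pderiv i (polyLaplacian d p) := by
  simp only [polyLaplacian, map_sum]
  refine Finset.sum_congr rfl fun j _ => ?_
  rw [pderiv_comm' j i p, pderiv_comm' j i]

lemma lap_Dd {d : ℕ} (a : Euc d) (p : MP d) :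
    polyLaplacian d (Dd a p) = Dd a (polyLaplacian d p) := by
  have : ∀ s : Finset (Fin (d+1)), polyLaplacian d (∑ i ∈ s, MvPolynomial.C (a i) * pderiv i p)
      = ∑ i ∈ s, MvPolynomial.C (a i) * pderiv i (polyLaplacian d p) := by
    intro s
    induction s using Finset.induction_on with
    | empty => simp [polyLaplacian]
    | insert i s hi ih => rw [Finset.sum_insert hi, Finset.sum_insert hi, lap_add, ih, lap_Cmul,
        lap_pderiv]
  rw [Dd_apply, Dd_apply, this]

lemma pderiv_lf {d : ℕ} (i : Fin (d+1)) (a : Euc d) :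
    pderiv i (lf a) = MvPolynomial.C (a i) := by
  rw [← Dd_single, Dd_lf]
  rw [inner_single1]

lemma lap_mul {d : ℕ} (p q : MP d) : polyLaplacian d (p * q)
    = p * polyLaplacian d q + q * polyLaplacian d p + 2 * ∑ i, pderiv i p * pderiv i q := by
  simp only [polyLaplacian, Finset.mul_sum, ← Finset.sum_add_distrib]
  refine Finset.sum_congr rfl fun i _ => ?_
  simp only [Derivation.leibniz, smul_eq_mul, map_add]
  ring

lemma lap_lf_mul {d : ℕ} (a : Euc d) (p : MP d) : polyLaplacian d (lf a * p)
    = lf a * polyLaplacian d p + 2 * Dd a p := by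
  have : polyLaplacian d (lf a) = 0 := by simp [polyLaplacian, pderiv_lf]
  rw [lap_mul, this, Dd_apply]
  simp [pderiv_lf]

lemma pderiv_Rad {d : ℕ} (i : Fin (d+1)) : pderiv i (Rad d) = 2 * MvPolynomial.X i := by
  rw [← Dd_single, Dd_Rad, lf_single]

lemma lap_Rad_mul {d m : ℕ} (p : MP d) (hp : p.IsHomogeneous m) : polyLaplacian d (Rad d * p)
    = Rad d * polyLaplacian d p + MvPolynomial.C (2 * ((d:ℝ) + 1) + 4 * m) * p := by
  have : polyLaplacian d (Rad d) = MvPolynomial.C (2 * ((d:ℝ) + 1)) := by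
    have h : ∀ i : Fin (d+1), pderiv i (2 : MP d) = 0 := fun i => by
      have : (2 : MP d) = MvPolynomial.C 2 := (map_ofNat _ 2).symm
      rw [this, MvPolynomial.pderiv_C]
    simp [polyLaplacian, pderiv_Rad, h, map_ofNat MvPolynomial.C 2]
    ring
  have e := hp.sum_X_mul_pderiv
  rw [lap_mul, this]
  have h2 : ∑ i, pderiv i (Rad d) * pderiv i p = 2 * (m • p) := by
    rw [← e, Finset.mul_sum]
    refine Finset.sum_congr rfl fun i _ => by rw [pderiv_Rad]; ring
  rw [h2]
  simp [map_ofNat MvPolynomial.C 2, map_ofNat MvPolynomial.C 4]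
  ring

def Hm (d k : ℕ) (p : MP d) : Prop := p.IsHomogeneous k ∧ polyLaplacian d p = 0

lemma hom0 {d : ℕ} {p : MP d} (hp : p.IsHomogeneous 0) : ∃ c, p = MvPolynomial.C c := by
  have h := hp.totalDegree_le
  exact ⟨_, MvPolynomial.totalDegree_eq_zero_iff_eq_C.1 (Nat.le_zero.1 h)⟩

lemma Hm.pd {d k : ℕ} {p : MP d} (h : Hm d (k+1) p) (i) : Hm d k (pderiv i p) :=
  ⟨h.1.pderiv, by rw [lap_pderiv, h.2, map_zero]⟩

lemma lf_hom {d : ℕ} (a : Euc d) : (lf a).IsHomogeneous 1 := by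
  refine MvPolynomial.IsHomogeneous.sum _ _ _ fun i _ => ?_
  simpa using (MvPolynomial.isHomogeneous_C (Fin (d+1)) (a i)).mul
    (MvPolynomial.isHomogeneous_X ℝ i)

lemma Rad_hom (d : ℕ) : (Rad d).IsHomogeneous 2 := by
  refine MvPolynomial.IsHomogeneous.sum _ _ _ fun i _ => ?_
  exact MvPolynomial.isHomogeneous_X_pow i 2

lemma Cmul_hom {d k : ℕ} (c : ℝ) {p : MP d} (h : p.IsHomogeneous k) :
    (MvPolynomial.C c * p).IsHomogeneous k := by
  simpa using (MvPolynomial.isHomogeneous_C (Fin (d+1)) c).mul h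

lemma Dd_hom {d k : ℕ} (a : Euc d) {p : MP d} (h : p.IsHomogeneous (k+1)) :
    (Dd a p).IsHomogeneous k := by
  rw [Dd_apply]
  exact MvPolynomial.IsHomogeneous.sum _ _ _ fun i _ => Cmul_hom _ h.pderiv

lemma Hm.Dd {d k : ℕ} {p : MP d} (h : Hm d (k+1) p) (a) : Hm d k (Dd a p) :=
  ⟨Dd_hom a h.1, by rw [lap_Dd, h.2, map_zero]⟩

lemma Hm.Cmul {d k : ℕ} {p : MP d} (h : Hm d k p) (c : ℝ) : Hm d k (MvPolynomial.C c * p) :=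
  ⟨Cmul_hom c h.1, by rw [lap_Cmul, h.2, mul_zero]⟩

lemma Hm.sub {d k : ℕ} {p q : MP d} (h : Hm d k p) (h' : Hm d k q) : Hm d k (p - q) :=
  ⟨h.1.sub h'.1, by rw [lap_sub, h.2, h'.2, sub_zero]⟩

lemma Hm.Lr {d k : ℕ} {p : MP d} (h : Hm d k p) (a b) : Hm d k (Lr a b p) := by
  constructor
  · rw [Lr_apply]
    cases k with
    | zero =>
      obtain ⟨c, rfl⟩ := hom0 h.1
      simp only [Dd_C, mul_zero, sub_zero]
      exact MvPolynomial.isHomogeneous_zero _ _ _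
    | succ k =>
      rw [add_comm k 1]
      exact ((lf_hom a).mul (Dd_hom b h.1)).sub ((lf_hom b).mul (Dd_hom a h.1))
  · rw [Lr_apply, lap_sub, lap_lf_mul, lap_lf_mul, lap_Dd, lap_Dd, h.2, Dd_comm a b]
    simp

lemma orth_lt {d : ℕ} (hd : 1 ≤ d) (b : ℕ) : ∀ (a : ℕ) (p q : MP d), a < b → Hm d a p → Hm d b q →
    ISl d (p * q) = 0 := by
  induction b with
  | zero => intro a p q h; omega
  | succ b ih =>
    intro a p q hab hp hq
    have e := hq.1.sum_X_mul_pderiv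
    have h1 : ((b:ℝ) + 1) * ISl d (p * q) = ∑ i, ISl d (MvPolynomial.X i * (p * pderiv i q)) := by
      have : p * ((b + 1) • q) = ∑ i, MvPolynomial.X i * (p * pderiv i q) := by
        rw [← e, Finset.mul_sum]
        refine Finset.sum_congr rfl fun i _ => by ring
      rw [← map_sum, ← this, mul_smul_comm, map_nsmul]
      simp
    have h2 : ((a + b : ℕ) + (d:ℝ)) * ∑ i, ISl d (MvPolynomial.X i * (p * pderiv i q)) = 0 := by
      rw [Finset.mul_sum]
      have : ∀ i, ((a + b : ℕ) + (d:ℝ)) * ISl d (MvPolynomial.X i * (p * pderiv i q))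
          = ISl d (p * pderiv i (pderiv i q)) := by
        intro i
        rw [← star_coord i _ (hp.1.mul (hq.pd i).1), Derivation.leibniz, smul_eq_mul, smul_eq_mul,
          map_add]
        have : ISl d (pderiv i q * pderiv i p) = 0 := by
          cases a with
          | zero =>
            obtain ⟨c, rfl⟩ := hom0 hp.1
            simp
          | succ a =>
            rw [mul_comm]
            exact ih a _ _ (by omega) (hp.pd i) (hq.pd i)
        rw [this, add_zero]
      simp only [this]
      rw [← map_sum, ← Finset.mul_sum]
      have h3 := hq.2
      rw [polyLaplacian] at h3
      rw [h3, mul_zero, map_zero]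
    rw [← h1] at h2
    have : (0:ℝ) < d := by exact_mod_cast hd
    have h4 : ((a + b : ℕ) + (d:ℝ)) ≠ 0 := by positivity
    have h5 : ((b:ℝ) + 1) ≠ 0 := by positivity
    simpa [h4, h5, -Nat.cast_add] using h2

lemma orth {d : ℕ} (hd : 1 ≤ d) {a b : ℕ} (hab : a ≠ b) {p q : MP d} (hp : Hm d a p)
    (hq : Hm d b q) : ISl d (p * q) = 0 := by
  rcases lt_or_gt_of_ne hab with h | h
  · exact orth_lt hd b a p q h hp hq
  · rw [mul_comm]; exact orth_lt hd a b q p h hq hp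

/-- zonal polynomial -/
noncomputable def Fz {d : ℕ} (x : Euc d) (α : ℝ) : ℕ → MP d
  | 0 => 1
  | 1 => MvPolynomial.C (2 * α) * lf x
  | n + 2 =>
      MvPolynomial.C (2 * ((n : ℝ) + 1 + α) / ((n : ℝ) + 2)) * (lf x * Fz x α (n + 1)) -
        MvPolynomial.C (((n : ℝ) + 2 * α) / ((n : ℝ) + 2)) * (Rad d * Fz x α n)

lemma two_ind {P : ℕ → Prop} (h0 : P 0) (h1 : P 1) (h : ∀ n, P n → P (n+1) → P (n+2)) (n : ℕ) :
    P n := Nat.twoStepInduction h0 h1 h n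

lemma Fz_hom {d : ℕ} (x : Euc d) (α : ℝ) (n : ℕ) : (Fz x α n).IsHomogeneous n := by
  induction n using two_ind with
  | h0 => exact MvPolynomial.isHomogeneous_one _ _
  | h1 => exact Cmul_hom _ (lf_hom x)
  | h n h0 h1 =>
    rw [Fz]
    refine (Cmul_hom _ ?_).sub (Cmul_hom _ ?_)
    · have := (lf_hom x).mul h1
      rwa [show 1 + (n + 1) = n + 2 by ring] at this
    · have := (Rad_hom d).mul h0
      rwa [show 2 + n = n + 2 by ring] at this

lemma Dd_Cmul {d : ℕ} (a : Euc d) (c : ℝ) (p : MP d) :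
    Dd a (MvPolynomial.C c * p) = MvPolynomial.C c * Dd a p := by
  rw [Derivation.leibniz, Dd_C]; simp

lemma Fz_D {d : ℕ} (x : Euc d) (hx : ‖x‖ = 1) (α : ℝ) (n : ℕ) :
    Dd x (Fz x α (n+1)) = MvPolynomial.C ((n:ℝ) + 2 * α) * Fz x α n := by
  have hxx : ⟪x, x⟫ = 1 := by rw [real_inner_self_eq_norm_sq, hx]; norm_num
  induction n using two_ind with
  | h0 => simp only [Fz, Dd_Cmul, Dd_lf, hxx]; simp
  | h1 =>
    simp only [Fz, map_sub, Dd_Cmul, Dd_lf, hxx, Derivation.leibniz, Dd_Rad, Dd_C, smul_zero, add_zero]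
    have h2 : (2 : MP d) = MvPolynomial.C 2 := (map_ofNat _ 2).symm
    simp only [h2, ← MvPolynomial.smul_eq_C_mul, smul_eq_mul, mul_smul_comm, map_one, mul_one,
      Derivation.map_one_eq_zero, one_mul, smul_smul, mul_zero, zero_add]
    rw [mul_comm (lf x) (MvPolynomial.C (2 * α)), ← MvPolynomial.smul_eq_C_mul]
    match_scalars
    push_cast
    field_simp
    ring
  | h n _ ih =>
    rw [Fz]
    simp only [map_sub, Dd_Cmul, Dd_lf, hxx, Derivation.leibniz, Dd_Rad, ih, smul_eq_mul, Dd_C, mul_zero,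
      add_zero]
    have h2 : (2 : MP d) = MvPolynomial.C 2 := (map_ofNat _ 2).symm
    rw [‹Dd x (Fz x α (n+1)) = _›]
    have h5 : Fz x α (n+2) = MvPolynomial.C (2 * ((n : ℝ) + 1 + α) / ((n : ℝ) + 2)) * (lf x * Fz x α (n + 1)) -
        MvPolynomial.C (((n : ℝ) + 2 * α) / ((n : ℝ) + 2)) * (Rad d * Fz x α n) := by rw [Fz]
    rw [show n + 1 + 1 = n + 2 from rfl, h5]
    simp only [h2, map_one, mul_one, ← MvPolynomial.smul_eq_C_mul, mul_smul_comm, smul_mul_assoc]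
    rw [mul_comm (Fz x α (n+1)) (lf x)]
    have a1 : (n:ℝ) + 2 ≠ 0 := by positivity
    have a2 : (n:ℝ) + 1 + 2 ≠ 0 := by positivity
    match_scalars
    · push_cast
      field_simp
      ring
    · push_cast
      field_simp
      ring

lemma Fz_H {d : ℕ} (x : Euc d) (hx : ‖x‖ = 1) (n : ℕ) :
    Hm d n (Fz x (((d:ℝ) - 1) / 2) n) := by
  refine ⟨Fz_hom _ _ _, ?_⟩
  induction n using two_ind with
  | h0 => rw [Fz, ← map_one MvPolynomial.C, lap_C]
  | h1 =>
    have : polyLaplacian d (lf x) = 0 := by simp [polyLaplacian, pderiv_lf]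
    rw [Fz, lap_Cmul, this, mul_zero]
  | h n h0 h1 =>
    rw [Fz, lap_sub, lap_Cmul, lap_Cmul, lap_lf_mul, lap_Rad_mul _ (Fz_hom _ _ n), h0, h1,
      Fz_D x hx]
    have h2 : (2 : MP d) = MvPolynomial.C 2 := (map_ofNat _ 2).symm
    simp only [h2, mul_zero, zero_add, ← MvPolynomial.smul_eq_C_mul]
    match_scalars
    field_simp
    ring

lemma eval_Dd_self {d k : ℕ} (x : Sph d) (q : MP d) (hq : q.IsHomogeneous k) :
    evS (Dd (x : Euc d) q) x = k * evS q x := by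
  have e := congrArg (fun p => evS p x) hq.sum_X_mul_pderiv
  simpa [evS, Dd_apply] using e

lemma ISl_Cmul {d : ℕ} (c : ℝ) (p : MP d) : ISl d (MvPolynomial.C c * p) = c * ISl d p :=
  IS_Cmul c p

lemma zonal_repr {d : ℕ} (hd : 1 ≤ d) (x : Sph d) (k : ℕ) : ∀ q : MP d, Hm d (k+1) q →
    ISl d (Fz (x : Euc d) (((d:ℝ) - 1) / 2) (k+1) * q)
      = ((d:ℝ) - 1) / (2 * ((k:ℝ) + 1) + d - 1) * evS q x := by
  have hd' : (1:ℝ) ≤ d := by exact_mod_cast hd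
  have hx : ‖(x : Euc d)‖ = 1 := by simp
  induction k with
  | zero =>
    intro q hq
    have h1 := star (x : Euc d) q hq.1
    obtain ⟨c, hc⟩ := hom0 (hq.Dd (x : Euc d)).1
    have h2 := eval_Dd_self x q hq.1
    rw [hc] at h1 h2
    rw [ISl_C] at h1
    simp [evS] at h2
    rw [Fz, mul_assoc, ISl_Cmul]
    rw [evS, ← h2, h1]
    push_cast
    have a1 : (2:ℝ) * (0 + 1) + d - 1 ≠ 0 := by linarith
    field_simp
    ring
  | succ k ih =>
    intro q hq
    have h1 := star (x : Euc d) (Fz (x : Euc d) (((d:ℝ) - 1) / 2) (k+1) * q)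
      ((Fz_hom _ _ _).mul hq.1)
    rw [Derivation.leibniz, smul_eq_mul, smul_eq_mul, Fz_D _ hx, map_add, ih _ (hq.Dd _),
      mul_left_comm q, ISl_Cmul, mul_comm q,
      orth hd (by omega) (Fz_H _ hx k) hq, eval_Dd_self x q hq.1] at h1
    rw [Fz, sub_mul, mul_assoc, mul_assoc, mul_assoc, mul_assoc, map_sub, ISl_Cmul, ISl_Cmul,
      ISl_Rad, orth hd (by omega) (Fz_H _ hx k) hq]
    have a1 : ((k + 1 + (k + 1 + 1) : ℕ) : ℝ) + d ≠ 0 := by positivity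
    have h2 := eq_div_of_mul_eq a1 ((mul_comm _ _).trans h1.symm)
    rw [h2]
    push_cast at a1 ⊢
    have a2 : (2:ℝ) * (k + 1) + d - 1 ≠ 0 := by
      have : (0:ℝ) ≤ k := by positivity
      linarith
    have a3 : (2:ℝ) * (k + 1 + 1) + d - 1 ≠ 0 := by
      have : (0:ℝ) ≤ k := by positivity
      linarith
    have a4 : (k:ℝ) + 2 ≠ 0 := by positivity
    have a5 : (2:ℝ) * (k + 1 + 1) + d - 1 = k + 1 + (k + 1 + 1) + d := by ring
    rw [a5]
    field_simp
    ring

lemma Lr_lf1 {d : ℕ} (x y : Sph d) (h : ⟪(x : Euc d), (y : Euc d)⟫ = 0) :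
    Lr (x : Euc d) y (lf (x : Euc d)) = - lf (y : Euc d) := by
  have h' : ⟪(y : Euc d), (x : Euc d)⟫ = 0 := by rw [real_inner_comm]; exact h
  rw [Lr_apply, Dd_lf, Dd_lf, h', real_inner_self_eq_norm_sq]; simp

lemma Lr_lf2 {d : ℕ} (x y : Sph d) (h : ⟪(x : Euc d), (y : Euc d)⟫ = 0) :
    Lr (x : Euc d) y (lf (y : Euc d)) = lf (x : Euc d) := by
  rw [Lr_apply, Dd_lf, Dd_lf, h, real_inner_self_eq_norm_sq]; simp

lemma Lr_Rad {d : ℕ} (x y : Euc d) : Lr x y (Rad d) = 0 := by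
  rw [Lr_apply, Dd_Rad, Dd_Rad]; ring

lemma Lr_C {d : ℕ} (x y : Euc d) (c : ℝ) : Lr x y (MvPolynomial.C c) = 0 := by
  rw [Lr_apply, Dd_C, Dd_C]; simp

lemma Lr_mul {d : ℕ} (x y : Euc d) (p q : MP d) : Lr x y (p * q) = p * Lr x y q + q * Lr x y p := by
  rw [Derivation.leibniz]; rfl

lemma evS_mul {d : ℕ} (p q : MP d) (y : Sph d) : evS (p * q) y = evS p y * evS q y := by simp [evS]
lemma evS_add {d : ℕ} (p q : MP d) (y : Sph d) : evS (p + q) y = evS p y + evS q y := by simp [evS]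
lemma evS_sub {d : ℕ} (p q : MP d) (y : Sph d) : evS (p - q) y = evS p y - evS q y := by simp [evS]
lemma evS_neg {d : ℕ} (p : MP d) (y : Sph d) : evS (-p) y = - evS p y := by simp [evS]
lemma evS_C {d : ℕ} (c : ℝ) (y : Sph d) : evS (MvPolynomial.C c) y = c := by simp [evS]
lemma evS_one {d : ℕ} (y : Sph d) : evS (1 : MP d) y = 1 := by simp [evS]
lemma evS_zero {d : ℕ} (y : Sph d) : evS (0 : MP d) y = 0 := by simp [evS]

lemma Fz_E0 {d : ℕ} (x : Sph d) (α : ℝ) (n : ℕ) (z : Sph d) :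
    evS (Fz (x : Euc d) α n) z = (gegenbauer α n).eval ⟪(x : Euc d), (z : Euc d)⟫ := by
  induction n using two_ind with
  | h0 => simp [Fz, gegenbauer, evS]
  | h1 => simp [Fz, gegenbauer, evS_mul, evS_C, evS_lf]
  | h n h0 h1 =>
    simp only [Fz, gegenbauer, evS_mul, evS_C, evS_sub, evS_lf, evS_Rad, h0, h1,
      Polynomial.eval_sub, Polynomial.eval_mul, Polynomial.eval_C, Polynomial.eval_X, one_mul]

lemma Fz_E1 {d : ℕ} (x y : Sph d) (h : ⟪(x : Euc d), (y : Euc d)⟫ = 0) (α : ℝ) (n : ℕ) (z : Sph d) :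
    evS (Lr (x : Euc d) y (Fz (x : Euc d) α n)) z
      = - (⟪(y : Euc d), (z : Euc d)⟫ *
        (gegenbauer α n).derivative.eval ⟪(x : Euc d), (z : Euc d)⟫) := by
  induction n using two_ind with
  | h0 => simp [Fz, gegenbauer, evS]
  | h1 =>
    simp only [Fz, gegenbauer, Lr_mul, Lr_C, Lr_lf1 x y h, evS_mul, evS_add, evS_neg, evS_C,
      evS_lf, evS_zero, Polynomial.derivative_mul, Polynomial.derivative_C,
      Polynomial.derivative_X, Polynomial.eval_add, Polynomial.eval_mul, Polynomial.eval_C,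
      Polynomial.eval_X, Polynomial.eval_zero, Polynomial.eval_one]
    ring
  | h n h0 h1 =>
    simp only [Fz, gegenbauer, Lr_mul, Lr_C, Lr_lf1 x y h, Lr_Rad, map_sub, evS_mul, evS_add,
      evS_sub, evS_neg, evS_C, h0, h1, evS_Rad, Fz_E0,
      evS_lf, evS_zero, Polynomial.derivative_mul, Polynomial.derivative_C,
      Polynomial.derivative_X, Polynomial.derivative_sub, Polynomial.eval_sub,
      Polynomial.eval_add, Polynomial.eval_mul, Polynomial.eval_C,
      Polynomial.eval_X, Polynomial.eval_zero, Polynomial.eval_one]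
    ring

lemma Fz_E2 {d : ℕ} (x y : Sph d) (h : ⟪(x : Euc d), (y : Euc d)⟫ = 0) (α : ℝ) (n : ℕ) (z : Sph d) :
    evS (Lr (x : Euc d) y (Lr (x : Euc d) y (Fz (x : Euc d) α n))) z
      = ⟪(y : Euc d), (z : Euc d)⟫ ^ 2 *
        (gegenbauer α n).derivative.derivative.eval ⟪(x : Euc d), (z : Euc d)⟫
        - ⟪(x : Euc d), (z : Euc d)⟫ *
        (gegenbauer α n).derivative.eval ⟪(x : Euc d), (z : Euc d)⟫ := by
  induction n using two_ind with
  | h0 => simp [Fz, gegenbauer, evS]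
  | h1 =>
    simp only [Fz, gegenbauer, Lr_mul, Lr_C, Lr_lf1 x y h, Lr_lf2 x y h, map_add, map_neg, map_zero,
      evS_mul, evS_add, evS_neg, evS_C, Polynomial.derivative_add, Polynomial.derivative_zero,
      Polynomial.derivative_one,
      evS_lf, evS_zero, Polynomial.derivative_mul, Polynomial.derivative_C,
      Polynomial.derivative_X, Polynomial.eval_add, Polynomial.eval_mul, Polynomial.eval_C,
      Polynomial.eval_X, Polynomial.eval_zero, Polynomial.eval_one]
    ring
  | h n h0 h1 =>
    simp only [Fz, gegenbauer, Lr_mul, Lr_C, Lr_lf1 x y h, Lr_lf2 x y h, Lr_Rad, map_sub, evS_mul,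
      evS_add, map_add, map_neg, map_zero, Polynomial.derivative_add, Polynomial.derivative_zero,
      Polynomial.derivative_one,
      evS_sub, evS_neg, evS_C, h0, h1, evS_Rad, Fz_E0, Fz_E1 x y h,
      evS_lf, evS_zero, Polynomial.derivative_mul, Polynomial.derivative_C,
      Polynomial.derivative_X, Polynomial.derivative_sub, Polynomial.eval_sub,
      Polynomial.eval_add, Polynomial.eval_mul, Polynomial.eval_C,
      Polynomial.eval_X, Polynomial.eval_zero, Polynomial.eval_one]
    ring

lemma Fz_E4 {d : ℕ} (x y : Sph d) (h : ⟪(x : Euc d), (y : Euc d)⟫ = 0) (α : ℝ) (n : ℕ) :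
    evS (Lr (x : Euc d) y (Lr (x : Euc d) y (Lr (x : Euc d) y
      (Lr (x : Euc d) y (Fz (x : Euc d) α n))))) x
      = 3 * (gegenbauer α n).derivative.derivative.eval 1 + (gegenbauer α n).derivative.eval 1 := by
  have h' : ⟪(y : Euc d), (x : Euc d)⟫ = 0 := by rw [real_inner_comm]; exact h
  have hxx : ⟪(x : Euc d), (x : Euc d)⟫ = 1 := by rw [real_inner_self_eq_norm_sq]; simp
  induction n using two_ind with
  | h0 => simp [Fz, gegenbauer, evS]
  | h1 =>
    simp only [Fz, gegenbauer, Lr_mul, Lr_C, Lr_lf1 x y h, Lr_lf2 x y h, map_add, map_neg, map_zero,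
      evS_mul, evS_add, evS_neg, evS_C, Polynomial.derivative_add, Polynomial.derivative_zero,
      Polynomial.derivative_one, h', hxx,
      evS_lf, evS_zero, Polynomial.derivative_mul, Polynomial.derivative_C,
      Polynomial.derivative_X, Polynomial.eval_add, Polynomial.eval_mul, Polynomial.eval_C,
      Polynomial.eval_X, Polynomial.eval_zero, Polynomial.eval_one]
    ring
  | h n h0 h1 =>
    simp only [Fz, gegenbauer, Lr_mul, Lr_C, Lr_lf1 x y h, Lr_lf2 x y h, Lr_Rad, map_sub, evS_mul,
      evS_add, map_add, map_neg, map_zero, Polynomial.derivative_add, Polynomial.derivative_zero,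
      Polynomial.derivative_one,
      evS_sub, evS_neg, evS_C, h0, h1, evS_Rad, Fz_E0, Fz_E1 x y h, Fz_E2 x y h, h', hxx,
      evS_lf, evS_zero, Polynomial.derivative_mul, Polynomial.derivative_C,
      Polynomial.derivative_X, Polynomial.derivative_sub, Polynomial.eval_sub,
      Polynomial.eval_add, Polynomial.eval_mul, Polynomial.eval_C,
      Polynomial.eval_X, Polynomial.eval_zero, Polynomial.eval_one]
    ring

lemma geg_one_step (α : ℝ) (k : ℕ) :
    ((k:ℝ) + 1) * (gegenbauer α (k+1)).eval 1 = ((k:ℝ) + 2 * α) * (gegenbauer α k).eval 1 := by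
  induction k with
  | zero => simp [gegenbauer]
  | succ k ih =>
    rw [gegenbauer]
    simp only [Polynomial.eval_sub, Polynomial.eval_mul, Polynomial.eval_C, Polynomial.eval_X]
    have : (k:ℝ) + 2 ≠ 0 := by positivity
    push_cast
    field_simp
    linear_combination (k + 1 + 1 : ℝ) * ih

lemma geg_one {d : ℕ} (hd : 1 ≤ d) (k : ℕ) :
    ((k:ℝ) + d - 1) * (gegenbauer (((d:ℝ) - 1) / 2) k).eval 1
      = ((d:ℝ) - 1) * (Nat.choose (d + k - 1) k : ℝ) := by
  obtain ⟨e, rfl⟩ := Nat.exists_eq_add_of_le' hd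
  induction k with
  | zero => simp [gegenbauer]
  | succ k ih =>
    have h1 := geg_one_step ((((e + 1 : ℕ):ℝ) - 1) / 2) k
    have h2 : ((k:ℝ) + 1) * (Nat.choose (e + 1 + (k + 1) - 1) (k+1) : ℝ)
        = ((e:ℝ) + k + 1) * (Nat.choose (e + 1 + k - 1) k : ℝ) := by
      rw [show e + 1 + (k + 1) - 1 = e + k + 1 by omega, show e + 1 + k - 1 = e + k by omega]
      have := Nat.add_one_mul_choose_eq (e + k) k
      have h3 : (((e + k + 1) * (e+k).choose k : ℕ) : ℝ) = (((e + k + 1).choose (k+1) * (k+1) : ℕ) : ℝ) := by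
        exact_mod_cast this
      push_cast at h3
      linarith
    have a : (k:ℝ) + 1 ≠ 0 := by positivity
    apply mul_left_cancel₀ a
    push_cast at *
    linear_combination (k + 1 + (e+1) - 1 : ℝ) * h1 + ((e:ℝ) + k + 1) * ih - (e : ℝ) * h2

lemma harm_ae {d n : ℕ} (hd : 1 ≤ d) (P : SphFun d) (p : ℕ → MP d) (hp : ∀ j, Hm d j (p j))
    (hP : P = ∑ j ∈ Finset.Icc 1 n, evS (p j)) (k : ℕ) (hk : k ∈ Finset.Icc 1 n) :
    harmComponent d n P k =ᵐ[muSph d] evS (p k) := by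
  have h : ∃ c : ℕ → SphFun d, (∀ j, c j ∈ sphHarmonic d j) ∧ P = ∑ j ∈ Finset.Icc 1 n, c j :=
    ⟨fun j => evS (p j), fun j => ⟨p j, (hp j).1, (hp j).2, fun _ => rfl⟩, hP⟩
  rw [harmComponent, dif_pos h]
  obtain ⟨h1, h2⟩ := h.choose_spec
  generalize h.choose = c at h1 h2
  choose p' h3 h4 h5 using h1
  have hc : ∀ j, c j = evS (p' j) := fun j => funext (h5 j)
  have hq : ∀ j, Hm d j (p' j - p j) := fun j => Hm.sub ⟨h3 j, h4 j⟩ (hp j)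
  have hz : ∀ y, evS (∑ j ∈ Finset.Icc 1 n, (p' j - p j)) y = 0 := by
    intro y
    have e1 := congrFun h2 y
    have e2 := congrFun hP y
    rw [Finset.sum_apply] at e1 e2
    simp only [hc] at e1
    simp only [evS, map_sum, map_sub, Finset.sum_sub_distrib] at *
    rw [← e1, ← e2, sub_self]
  have h6 : ISl d ((∑ j ∈ Finset.Icc 1 n, (p' j - p j)) * (p' k - p k)) = 0 := by
    rw [ISl_apply, IS]
    simp only [evS_mul, hz, zero_mul, integral_zero]
  rw [Finset.sum_mul, map_sum, Finset.sum_eq_single k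
    (fun j _ hj => orth hd hj (hq j) (hq k)) (fun h => absurd hk h), ISl_apply, IS] at h6
  rw [integral_eq_zero_iff_of_nonneg (fun y => by
    simp only [evS_mul, Pi.zero_apply]; exact mul_self_nonneg _) (evS_int _)] at h6
  filter_upwards [h6] with y hy
  simp only [evS_mul, Pi.zero_apply, mul_self_eq_zero, evS_sub] at hy
  rw [hc]
  linarith

lemma IS_Lr_symm {d : ℕ} (x y : Sph d) (h : ⟪(x : Euc d), (y : Euc d)⟫ = 0) (p q : MP d) :
    ISl d (Lr (x : Euc d) y p * q) = - ISl d (p * Lr (x : Euc d) y q) := by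
  have := IS_Lr (x : Euc d) (y : Euc d) (by simp) (by simp) h (p * q)
  rw [Lr_mul, map_add, mul_comm q] at this
  linarith

lemma norm_comp {d : ℕ} (hd : 1 ≤ d) (x y : Sph d) (h : ⟪(x : Euc d), (y : Euc d)⟫ = 0) (k : ℕ)
    (hk : 1 ≤ k) :
    ISl d (Lr (x : Euc d) y (Lr (x : Euc d) y (Fz (x : Euc d) (((d:ℝ) - 1) / 2) k)) *
      Lr (x : Euc d) y (Lr (x : Euc d) y (Fz (x : Euc d) (((d:ℝ) - 1) / 2) k)))
    = ((d:ℝ) - 1) / (2 * (k:ℝ) + d - 1) *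
      (3 * (gegenbauer (((d:ℝ) - 1) / 2) k).derivative.derivative.eval 1
        + (gegenbauer (((d:ℝ) - 1) / 2) k).derivative.eval 1) := by
  obtain ⟨k, rfl⟩ := Nat.exists_eq_add_of_le' hk
  rw [IS_Lr_symm x y h, IS_Lr_symm x y h, neg_neg, zonal_repr hd x k _
    (((((Fz_H (x : Euc d) (by simp) _).Lr _ _).Lr _ _).Lr _ _).Lr _ _), Fz_E4 x y h]
  push_cast
  rfl

end Aux

/-- Let `x₀, y₀ ∈ S^d` be orthogonal and
`G''(y) = (y₀,y)² g_w''((x₀,y)) − (x₀,y) g_w'((x₀,y))`. Then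
`⟨G'', G''⟩_w = 3 g_w''(1) + g_w'(1)`. -/
theorem statement13 (d n : ℕ) (hd : 1 ≤ d) (x₀ y₀ : Sph d)
    (horth : ⟪(x₀ : Euc d), (y₀ : Euc d)⟫ = 0) :
    innerW d n
      (fun y => ⟪(y₀ : Euc d), (y : Euc d)⟫ ^ 2 *
          (gw d n).derivative.derivative.eval ⟪(x₀ : Euc d), (y : Euc d)⟫ -
        ⟪(x₀ : Euc d), (y : Euc d)⟫ * (gw d n).derivative.eval ⟪(x₀ : Euc d), (y : Euc d)⟫)
      (fun y => ⟪(y₀ : Euc d), (y : Euc d)⟫ ^ 2 *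
          (gw d n).derivative.derivative.eval ⟪(x₀ : Euc d), (y : Euc d)⟫ -
        ⟪(x₀ : Euc d), (y : Euc d)⟫ * (gw d n).derivative.eval ⟪(x₀ : Euc d), (y : Euc d)⟫) =
      3 * (gw d n).derivative.derivative.eval 1 + (gw d n).derivative.eval 1 := by
  set K : ℕ → ℝ := fun k => dimHarm d k /
    (((k : ℝ) * ((k : ℝ) + d - 1)) * (gegenbauer (((d : ℝ) - 1) / 2) k).eval 1) with hK
  set p : ℕ → MP d := fun k => MvPolynomial.C (K k) *
    Lr (x₀ : Euc d) y₀ (Lr (x₀ : Euc d) y₀ (Fz (x₀ : Euc d) (((d:ℝ) - 1) / 2) k)) with hp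
  have hH : ∀ j, Hm d j (p j) := fun j =>
    (((Fz_H (x₀ : Euc d) (by simp) j).Lr _ _).Lr _ _).Cmul _
  have hg : gw d n = ∑ k ∈ Finset.Icc 1 n,
      Polynomial.C (K k) * gegenbauer (((d : ℝ) - 1) / 2) k := rfl
  have h1 : ∀ t, (gw d n).derivative.eval t = ∑ k ∈ Finset.Icc 1 n,
      K k * (gegenbauer (((d : ℝ) - 1) / 2) k).derivative.eval t := by
    intro t
    simp only [hg, Polynomial.derivative_sum, Polynomial.derivative_C_mul,
      Polynomial.eval_finset_sum, Polynomial.eval_mul, Polynomial.eval_C]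
  have h2 : ∀ t, (gw d n).derivative.derivative.eval t = ∑ k ∈ Finset.Icc 1 n,
      K k * (gegenbauer (((d : ℝ) - 1) / 2) k).derivative.derivative.eval t := by
    intro t
    simp only [hg, Polynomial.derivative_sum, Polynomial.derivative_C_mul,
      Polynomial.eval_finset_sum, Polynomial.eval_mul, Polynomial.eval_C]
  generalize hPdef : (fun y : Sph d => ⟪(y₀ : Euc d), (y : Euc d)⟫ ^ 2 *
          (gw d n).derivative.derivative.eval ⟪(x₀ : Euc d), (y : Euc d)⟫ -
        ⟪(x₀ : Euc d), (y : Euc d)⟫ * (gw d n).derivative.eval ⟪(x₀ : Euc d), (y : Euc d)⟫) = P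
  have hP : P = ∑ j ∈ Finset.Icc 1 n, evS (p j) := by
    rw [← hPdef]
    ext y
    rw [Finset.sum_apply, h1, h2, Finset.mul_sum, Finset.mul_sum, ← Finset.sum_sub_distrib]
    refine Finset.sum_congr rfl fun k _ => ?_
    simp only [hp, evS_mul, evS_C, Fz_E2 x₀ y₀ horth]
    ring
  rw [innerW, h1, h2, Finset.mul_sum, ← Finset.sum_add_distrib]
  refine Finset.sum_congr rfl fun k hk => ?_
  have hae := harm_ae hd P p hH hP k hk
  have hint : ∫ x, harmComponent d n P k x * harmComponent d n P k x ∂muSph d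
      = ISl d (p k * p k) := by
    rw [ISl_apply, IS]
    refine integral_congr_ae ?_
    filter_upwards [hae] with y hy
    simp only [hy, evS_mul]
  have hk1 : 1 ≤ k := (Finset.mem_Icc.1 hk).1
  have h3 : p k * p k = MvPolynomial.C (K k) * (MvPolynomial.C (K k) *
      (Lr (x₀ : Euc d) y₀ (Lr (x₀ : Euc d) y₀ (Fz (x₀ : Euc d) (((d:ℝ) - 1) / 2) k)) *
      Lr (x₀ : Euc d) y₀ (Lr (x₀ : Euc d) y₀ (Fz (x₀ : Euc d) (((d:ℝ) - 1) / 2) k)))) := by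
    simp only [hp]; ring
  rw [hint, h3, ISl_Cmul, ISl_Cmul, norm_comp hd x₀ y₀ horth k hk1]
  have hd1 : (1:ℝ) ≤ d := by exact_mod_cast hd
  have hk2 : (1:ℝ) ≤ k := by exact_mod_cast hk1
  have a1 : (k:ℝ) ≠ 0 := by linarith
  have a2 : (k:ℝ) + d - 1 ≠ 0 := by linarith
  have a3 : 2 * (k:ℝ) + d - 1 ≠ 0 := by linarith
  have key : (k:ℝ) * ((k:ℝ) + d - 1) * (K k * (K k * (((d:ℝ) - 1) / (2 * (k:ℝ) + d - 1)))) = K k := by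
    have hgo := geg_one hd k
    by_cases hG : (gegenbauer (((d : ℝ) - 1) / 2) k).eval 1 = 0
    · have : K k = 0 := by simp [hK, hG]
      rw [this]; ring
    · simp only [hK, dimHarm]
      generalize (gegenbauer (((d : ℝ) - 1) / 2) k).eval 1 = G at *
      generalize ((d + k - 1).choose k : ℝ) = h at *
      field_simp
      linear_combination (-h) * ((k:ℝ) * 2 + d - 1) * hgo
  linear_combination (3 * (gegenbauer (((d:ℝ) - 1) / 2) k).derivative.derivative.eval 1
        + (gegenbauer (((d:ℝ) - 1) / 2) k).derivative.eval 1) * key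
end

section
/- Suppose the points x_1,…,x_N ∈ S^d satisfy the Marcinkiewicz–Zygmund property of degree 2n. For P ∈ P_n let L′(P) ∈ P_n be the unique element satisfying ⟨L′(P), Q⟩_w = (1/N)·Σ_{i=1}^N (∇Q(x_i), ∇P(x_i)) for all Q ∈ P_n. Then ‖L′(P)‖_w ≥ (1/2)·‖P‖_w for every P ∈ P_n. -/
open MeasureTheory Finset
open scoped RealInnerProductSpace

noncomputable section
attribute [local instance] Classical.propDecidable

end

/-- Evaluation of a polynomial as a function on Euclidean space. -/
noncomputable def polyEv (d : ℕ) (p : MvPolynomial (Fin (d + 1)) ℝ) (x : Euc d) : ℝ :=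
  MvPolynomial.eval (fun i => x i) p

/-- Formal gradient vector of a polynomial at a point. -/
noncomputable def polyGrad (d : ℕ) (p : MvPolynomial (Fin (d + 1)) ℝ) (x : Euc d) : Euc d :=
  WithLp.toLp 2 (fun i => polyEv d (MvPolynomial.pderiv i p) x)

lemma polyEv_hasFDerivAt (d : ℕ) (p : MvPolynomial (Fin (d + 1)) ℝ) (x : Euc d) :
    HasFDerivAt (polyEv d p) (innerSL ℝ (polyGrad d p x)) x := by
  induction p using MvPolynomial.induction_on with
  | C a =>
    have h1 : polyEv d (MvPolynomial.C a) = fun _ => a := by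
      funext y; simp [polyEv]
    have h2 : polyGrad d (MvPolynomial.C a) x = 0 := by
      ext i; simp [polyGrad, polyEv]
    rw [h1, h2, map_zero]
    exact hasFDerivAt_const a x
  | add p q hp hq =>
    have h1 : polyEv d (p + q) = fun y => polyEv d p y + polyEv d q y := by
      funext y; simp [polyEv]
    have h2 : polyGrad d (p + q) x = polyGrad d p x + polyGrad d q x := by
      ext i; simp [polyGrad, polyEv]
    rw [h1, h2, map_add]
    exact hp.add hq
  | mul_X p j hp =>
    have h1 : polyEv d (p * MvPolynomial.X j) = fun y => polyEv d p y * y j := by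
      funext y; simp [polyEv]
    have h2 : polyGrad d (p * MvPolynomial.X j) x
        = polyEv d p x • EuclideanSpace.single j (1 : ℝ) + x j • polyGrad d p x := by
      ext i
      simp [polyGrad, polyEv, MvPolynomial.pderiv_X, Pi.single_apply]
      by_cases h : i = j
      · subst h; simp
      · simp [h, Ne.symm h]
    have h3 : HasFDerivAt (fun y : Euc d => y j)
        (innerSL ℝ (EuclideanSpace.single j (1 : ℝ))) x := by
      have h4 : HasFDerivAt (fun y : Euc d => y j)
          (EuclideanSpace.proj j : Euc d →L[ℝ] ℝ) x :=
        (EuclideanSpace.proj j : Euc d →L[ℝ] ℝ).hasFDerivAt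
      convert! h4 using 1
      ext y
      simp [EuclideanSpace.inner_single_left]
    rw [h1, h2, map_add]
    simp only [map_smul]
    exact hp.mul h3

lemma polyEv_continuous (d : ℕ) (p : MvPolynomial (Fin (d + 1)) ℝ) :
    Continuous (polyEv d p) :=
  continuous_iff_continuousAt.2 fun x => (polyEv_hasFDerivAt d p x).continuousAt

lemma polyEv_smul (d m : ℕ) (p : MvPolynomial (Fin (d + 1)) ℝ) (hp : p.IsHomogeneous m)
    (r : ℝ) (x : Euc d) : polyEv d p (r • x) = r ^ m * polyEv d p x := by
  simp only [polyEv, MvPolynomial.eval_eq, Finset.mul_sum]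
  refine Finset.sum_congr rfl fun s hs => ?_
  have h := hp (MvPolynomial.mem_support_iff.1 hs)
  simp only [PiLp.smul_apply, smul_eq_mul, mul_pow, Finset.prod_mul_distrib]
  rw [Finset.prod_pow_eq_pow_sum]
  have h' : ∑ i, s i = m := by
    rw [← h, Finsupp.weight_apply, Finsupp.sum_fintype] <;> simp
  have h2 : ∑ i ∈ s.support, s i = ∑ i, s i :=
    Finset.sum_subset (Finset.subset_univ _) (by simp)
  rw [h2, h']
  ring

lemma exists_sph (d : ℕ) (x : Euc d) : ∃ s : Sph d, x = ‖x‖ • (s : Euc d) := by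
  by_cases hx : x = 0
  · refine ⟨⟨EuclideanSpace.single 0 1, by simp⟩, by simp [hx]⟩
  · refine ⟨⟨‖x‖⁻¹ • x, ?_⟩, ?_⟩
    · rw [mem_sphere_zero_iff_norm, norm_smul, norm_inv, norm_norm,
        inv_mul_cancel₀ (norm_ne_zero_iff.mpr hx)]
    · rw [smul_smul, mul_inv_cancel₀ (norm_ne_zero_iff.mpr hx), one_smul]

lemma radial_integrableOn (a : ℕ) :
    IntegrableOn (fun r : ℝ => r ^ a * Real.exp (-r ^ 2)) (Set.Ioi 0) := by
  have := integrableOn_rpow_mul_exp_neg_mul_sq (b := 1) one_pos (s := a)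
    (by have : (0 : ℝ) ≤ a := a.cast_nonneg
        linarith)
  simpa using this

/-- Radial Gaussian moment. -/
noncomputable def radJ (a : ℕ) : ℝ := ∫ r in Set.Ioi (0 : ℝ), r ^ a * Real.exp (-r ^ 2)

lemma radJ_eq (a : ℕ) : radJ a = (1 / 2) * Real.Gamma (((a : ℝ) + 1) / 2) := by
  have := integral_rpow_mul_exp_neg_rpow (p := 2) (q := a) two_pos
    (by have : (0 : ℝ) ≤ a := a.cast_nonneg
        linarith)
  rw [← this, radJ]
  simp

lemma radJ_pos (a : ℕ) : 0 < radJ a := by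
  rw [radJ_eq]
  have : 0 < Real.Gamma (((a : ℝ) + 1) / 2) := Real.Gamma_pos_of_pos (by positivity)
  positivity

lemma radJ_succ (a : ℕ) : 2 * radJ (a + 2) = ((a : ℝ) + 1) * radJ a := by
  rw [radJ_eq, radJ_eq]
  have h : (((a + 2 : ℕ) : ℝ) + 1) / 2 = ((a : ℝ) + 1) / 2 + 1 := by push_cast; ring
  rw [h, Real.Gamma_add_one (by positivity)]
  ring

lemma gauss_integrable (d m : ℕ) (p : MvPolynomial (Fin (d + 1)) ℝ) (hp : p.IsHomogeneous m) :
    Integrable (fun x : Euc d => polyEv d p x * Real.exp (-‖x‖ ^ 2)) := by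
  obtain ⟨C, hC⟩ := (isCompact_sphere (0 : Euc d) 1).exists_bound_of_continuousOn
    (polyEv_continuous d p).continuousOn
  have h1 : Integrable (fun x : Euc d => ‖x‖ ^ m * Real.exp (-‖x‖ ^ 2)) := by
    rw [integrable_fun_norm_addHaar (volume : Measure (Euc d))
      (f := fun r => r ^ m * Real.exp (-r ^ 2))]
    convert! radial_integrableOn (Module.finrank ℝ (Euc d) - 1 + m) using 2 with r
    simp only [smul_eq_mul, pow_add]
    ring
  refine (h1.const_mul C).mono' ?_ (Filter.Eventually.of_forall fun x => ?_)
  · have := polyEv_continuous d p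
    exact Continuous.aestronglyMeasurable (by fun_prop)
  · obtain ⟨s, hs⟩ := exists_sph d x
    have h2 := hC s s.2
    have h3 : polyEv d p x = ‖x‖ ^ m * polyEv d p s := by
      conv_lhs => rw [hs]
      exact polyEv_smul d m p hp _ _
    rw [norm_mul, h3, norm_mul, norm_pow, norm_norm, Real.norm_of_nonneg (Real.exp_pos _).le]
    calc _ ≤ ‖x‖ ^ m * C * Real.exp (-‖x‖ ^ 2) := by gcongr
      _ = _ := by ring

lemma gauss_polar (d m : ℕ) (p : MvPolynomial (Fin (d + 1)) ℝ) (hp : p.IsHomogeneous m) :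
    ∫ x : Euc d, polyEv d p x * Real.exp (-‖x‖ ^ 2) =
      (∫ s : Sph d, polyEv d p s ∂(volume : Measure (Euc d)).toSphere) * radJ (m + d) := by
  have hdim : Module.finrank ℝ (Euc d) - 1 = d := by simp
  set μ : Measure (Euc d) := volume
  calc
    _ = ∫ x : ({(0)}ᶜ : Set (Euc d)), polyEv d p x.1 * Real.exp (-‖x.1‖ ^ 2) ∂(μ.comap (↑)) := by
      rw [integral_subtype_comap (measurableSet_singleton _).compl
        fun x ↦ polyEv d p x * Real.exp (-‖x‖ ^ 2), restrict_compl_singleton]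
    _ = ∫ x : Sph d × Set.Ioi (0 : ℝ), polyEv d p x.1 * (x.2.1 ^ m * Real.exp (-x.2.1 ^ 2))
          ∂μ.toSphere.prod (.volumeIoiPow (Module.finrank ℝ (Euc d) - 1)) := by
      rw [← μ.measurePreserving_homeomorphUnitSphereProd.integral_comp
        (Homeomorph.measurableEmbedding _)]
      refine integral_congr_ae (Filter.Eventually.of_forall fun x => ?_)
      have hx : x.1 = ‖x.1‖ • (‖x.1‖⁻¹ • x.1) := by
        rw [smul_smul, mul_inv_cancel₀ (norm_ne_zero_iff.mpr x.2), one_smul]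
      have h3 : polyEv d p x.1 = ‖x.1‖ ^ m * polyEv d p (‖x.1‖⁻¹ • x.1) := by
        conv_lhs => rw [hx]
        exact polyEv_smul d m p hp _ _
      simp only [homeomorphUnitSphereProd_apply_snd_coe, homeomorphUnitSphereProd_apply_fst_coe]
      rw [h3]
      ring
    _ = (∫ s : Sph d, polyEv d p s ∂μ.toSphere) *
          ∫ r : Set.Ioi (0 : ℝ), (r.1 ^ m * Real.exp (-r.1 ^ 2))
            ∂.volumeIoiPow (Module.finrank ℝ (Euc d) - 1) :=
      integral_prod_mul (fun s : Sph d => polyEv d p s)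
        (fun r : Set.Ioi (0 : ℝ) => r.1 ^ m * Real.exp (-r.1 ^ 2))
    _ = _ := by
      congr 1
      simp only [Measure.volumeIoiPow, ENNReal.ofReal, hdim]
      rw [integral_withDensity_eq_integral_smul,
        integral_subtype_comap measurableSet_Ioi
          fun a ↦ Real.toNNReal (a ^ d) • (a ^ m * Real.exp (-a ^ 2)), radJ,
        setIntegral_congr_fun measurableSet_Ioi fun x hx ↦ ?_]
      · rw [NNReal.smul_def, Real.coe_toNNReal _ (pow_nonneg hx.out.le _), smul_eq_mul, pow_add]
        ring
      · exact (measurable_subtype_coe.pow_const _).real_toNNReal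

lemma gauss_parts (d m : ℕ) (p : MvPolynomial (Fin (d + 1)) ℝ) (hp : p.IsHomogeneous m)
    (i : Fin (d + 1)) :
    ∫ x : Euc d, polyEv d (MvPolynomial.pderiv i p) x * Real.exp (-‖x‖ ^ 2) =
      2 * ∫ x : Euc d, polyEv d (MvPolynomial.X i * p) x * Real.exp (-‖x‖ ^ 2) := by
  have hg : ∀ x : Euc d, HasFDerivAt (fun x : Euc d => Real.exp (-‖x‖ ^ 2))
      (Real.exp (-‖x‖ ^ 2) • (-((2 : ℝ) • innerSL ℝ x) : Euc d →L[ℝ] ℝ)) x := fun x => by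
    have := ((hasStrictFDerivAt_norm_sq x).hasFDerivAt.neg).exp
    convert! this using 3
    ext y
    simp [two_smul]
  have hX : (MvPolynomial.X i * p).IsHomogeneous (1 + m) :=
    (MvPolynomial.isHomogeneous_X _ i).mul hp
  have e1 : ∀ x : Euc d, innerSL ℝ (polyGrad d p x) (EuclideanSpace.single i (1 : ℝ))
      = polyEv d (MvPolynomial.pderiv i p) x := by
    intro x; simp [polyGrad, EuclideanSpace.inner_single_right]
  have e2 : ∀ x : Euc d, polyEv d p x * ((Real.exp (-‖x‖ ^ 2) • (-((2 : ℝ) • innerSL ℝ x) : Euc d →L[ℝ] ℝ))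
      (EuclideanSpace.single i (1 : ℝ)))
      = -2 * (polyEv d (MvPolynomial.X i * p) x * Real.exp (-‖x‖ ^ 2)) := by
    intro x; simp [polyEv, EuclideanSpace.inner_single_right]; ring
  have key := integral_bilinear_hasFDerivAt_right_eq_neg_left_of_integrable
    (μ := (volume : Measure (Euc d))) (B := ContinuousLinearMap.mul ℝ ℝ)
    (f := polyEv d p) (f' := fun x => innerSL ℝ (polyGrad d p x))
    (g := fun x : Euc d => Real.exp (-‖x‖ ^ 2))
    (g' := fun x => Real.exp (-‖x‖ ^ 2) • (-((2 : ℝ) • innerSL ℝ x) : Euc d →L[ℝ] ℝ))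
    (v := EuclideanSpace.single i (1 : ℝ))
    (by simp only [ContinuousLinearMap.mul_apply', e1]
        exact gauss_integrable d _ _ hp.pderiv)
    (by simp only [ContinuousLinearMap.mul_apply', e2]
        exact (gauss_integrable d _ _ hX).const_mul _)
    (by simpa only [ContinuousLinearMap.mul_apply'] using gauss_integrable d _ _ hp)
    (fun x _ => polyEv_hasFDerivAt d p x) (fun x _ => hg x)
  simp only [ContinuousLinearMap.mul_apply', e1, e2] at key
  rw [integral_const_mul] at key
  linarith

/-- Integral of a polynomial over the sphere. -/
noncomputable def sphI (d : ℕ) (p : MvPolynomial (Fin (d + 1)) ℝ) : ℝ :=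
  ∫ s : Sph d, polyEv d p s ∂muSph d

/-- The first-order integration formula on the sphere. -/
lemma sphI_pderiv (d m : ℕ) (p : MvPolynomial (Fin (d + 1)) ℝ) (hp : p.IsHomogeneous (m + 1))
    (i : Fin (d + 1)) :
    sphI d (MvPolynomial.pderiv i p) = ((m : ℝ) + 1 + d) * sphI d (MvPolynomial.X i * p) := by
  have h := gauss_parts d _ p hp i
  rw [gauss_polar d m _ (by simpa using hp.pderiv (i := i)),
    gauss_polar d (1 + (m + 1)) _ ((MvPolynomial.isHomogeneous_X _ i).mul hp)] at h
  have e : 1 + (m + 1) + d = (m + d) + 2 := by ring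
  have h2 := radJ_succ (m + d)
  have h3 := (radJ_pos (m + d)).ne'
  rw [e] at h
  unfold sphI muSph
  rw [integral_smul_measure, integral_smul_measure]
  have h4 : (∫ s : Sph d, polyEv d (MvPolynomial.pderiv i p) s ∂(volume : Measure (Euc d)).toSphere)
      = ((m : ℝ) + 1 + d) *
      ∫ s : Sph d, polyEv d (MvPolynomial.X i * p) s ∂(volume : Measure (Euc d)).toSphere := by
    apply mul_right_cancel₀ h3
    rw [h]
    push_cast at h2
    linear_combination (∫ s : Sph d, polyEv d (MvPolynomial.X i * p) s ∂(volume : Measure (Euc d)).toSphere) * h2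
  rw [h4]
  simp only [smul_eq_mul]
  ring

instance muSph_finite (d : ℕ) : IsFiniteMeasure (muSph d) := by
  unfold muSph
  refine ⟨?_⟩
  rw [Measure.smul_apply, smul_eq_mul]
  refine ENNReal.mul_lt_top ?_ (measure_lt_top _ _)
  rw [ENNReal.inv_lt_top, pos_iff_ne_zero, Ne, Measure.measure_univ_eq_zero]
  exact Measure.toSphere_ne_zero _

lemma integrable_of_continuous_sph (d : ℕ) (f : Sph d → ℝ) (hf : Continuous f) :
    Integrable f (muSph d) := by
  obtain ⟨C, hC⟩ := isCompact_univ.exists_bound_of_continuousOn hf.continuousOn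
  exact Integrable.of_bound hf.aestronglyMeasurable C
    (Filter.Eventually.of_forall fun x => hC x (Set.mem_univ x))

lemma polyEv_sph_continuous (d : ℕ) (p : MvPolynomial (Fin (d + 1)) ℝ) :
    Continuous (fun s : Sph d => polyEv d p s) :=
  (polyEv_continuous d p).comp continuous_subtype_val

lemma polyEv_sph_integrable (d : ℕ) (p : MvPolynomial (Fin (d + 1)) ℝ) :
    Integrable (fun s : Sph d => polyEv d p s) (muSph d) :=
  integrable_of_continuous_sph d _ (polyEv_sph_continuous d p)

lemma sphI_add (d : ℕ) (p q : MvPolynomial (Fin (d + 1)) ℝ) :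
    sphI d (p + q) = sphI d p + sphI d q := by
  unfold sphI
  rw [← integral_add (polyEv_sph_integrable d p) (polyEv_sph_integrable d q)]
  simp [polyEv]

lemma sphI_sub (d : ℕ) (p q : MvPolynomial (Fin (d + 1)) ℝ) :
    sphI d (p - q) = sphI d p - sphI d q := by
  unfold sphI
  rw [← integral_sub (polyEv_sph_integrable d p) (polyEv_sph_integrable d q)]
  simp [polyEv]

lemma sphI_C_mul (d : ℕ) (c : ℝ) (p : MvPolynomial (Fin (d + 1)) ℝ) :
    sphI d (MvPolynomial.C c * p) = c * sphI d p := by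
  unfold sphI
  rw [← integral_const_mul]
  simp [polyEv]

lemma sphI_sum (d : ℕ) {ι : Type*} (t : Finset ι) (p : ι → MvPolynomial (Fin (d + 1)) ℝ) :
    sphI d (∑ i ∈ t, p i) = ∑ i ∈ t, sphI d (p i) := by
  unfold sphI
  rw [← integral_finsetSum _ (fun i _ => polyEv_sph_integrable d (p i))]
  simp [polyEv]

/-- Polynomial version of the scalar product of gradients. -/
noncomputable def gradProd (d : ℕ) (p q : MvPolynomial (Fin (d + 1)) ℝ) :
    MvPolynomial (Fin (d + 1)) ℝ :=
  ∑ i, MvPolynomial.pderiv i p * MvPolynomial.pderiv i q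

lemma sphI_green (d a b : ℕ) (p q : MvPolynomial (Fin (d + 1)) ℝ)
    (hp : p.IsHomogeneous (a + 1)) (hq : q.IsHomogeneous (b + 1)) (hΔ : polyLaplacian d q = 0) :
    sphI d (gradProd d p q) = ((a : ℝ) + b + 1 + d) * (b + 1) * sphI d (p * q) := by
  have h : ∀ i, sphI d (MvPolynomial.pderiv i (p * MvPolynomial.pderiv i q))
      = ((a : ℝ) + b + 1 + d) * sphI d (MvPolynomial.X i * (p * MvPolynomial.pderiv i q)) := by
    intro i
    have hh : (p * MvPolynomial.pderiv i q).IsHomogeneous ((a + b) + 1) := by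
      have := hp.mul (hq.pderiv (i := i))
      have e : a + 1 + (b + 1 - 1) = (a + b) + 1 := by omega
      rwa [e] at this
    have := sphI_pderiv d (a + b) _ hh i
    push_cast at this
    exact this
  have h2 : sphI d (∑ i, MvPolynomial.pderiv i (p * MvPolynomial.pderiv i q))
      = ((a : ℝ) + b + 1 + d) * sphI d (∑ i, MvPolynomial.X i * (p * MvPolynomial.pderiv i q)) := by
    rw [sphI_sum, sphI_sum, Finset.mul_sum]
    exact Finset.sum_congr rfl fun i _ => h i
  have e1 : ∑ i, MvPolynomial.pderiv i (p * MvPolynomial.pderiv i q)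
      = gradProd d p q + p * polyLaplacian d q := by
    unfold gradProd polyLaplacian
    rw [Finset.mul_sum, ← Finset.sum_add_distrib]
    refine Finset.sum_congr rfl fun i _ => ?_
    rw [MvPolynomial.pderiv_mul]
  have e2 : ∑ i, MvPolynomial.X i * (p * MvPolynomial.pderiv i q)
      = MvPolynomial.C ((b : ℝ) + 1) * (p * q) := by
    have := hq.sum_X_mul_pderiv
    calc _ = p * ∑ i, MvPolynomial.X i * MvPolynomial.pderiv i q := by
          rw [Finset.mul_sum]; exact Finset.sum_congr rfl fun i _ => by ring
      _ = _ := by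
          rw [this]; simp; ring
  rw [e1, e2, hΔ, mul_zero, add_zero, sphI_C_mul] at h2
  rw [h2]; ring

lemma gradProd_comm (d : ℕ) (p q : MvPolynomial (Fin (d + 1)) ℝ) :
    gradProd d p q = gradProd d q p :=
  Finset.sum_congr rfl fun _ _ => mul_comm _ _

lemma sphI_orth (d a b : ℕ) (p q : MvPolynomial (Fin (d + 1)) ℝ)
    (hp : p.IsHomogeneous (a + 1)) (hq : q.IsHomogeneous (b + 1))
    (hΔp : polyLaplacian d p = 0) (hΔ : polyLaplacian d q = 0) (hab : a ≠ b) :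
    sphI d (p * q) = 0 := by
  have h1 := sphI_green d a b p q hp hq hΔ
  have h2 := sphI_green d b a q p hq hp hΔp
  rw [gradProd_comm, mul_comm q p] at h2
  have h3 : (((a : ℝ) + b + 1 + d) * (b - a)) * sphI d (p * q) = 0 := by
    linear_combination h2 - h1
  rcases mul_eq_zero.1 h3 with h | h
  · exfalso
    rcases mul_eq_zero.1 h with h | h
    · have : (0 : ℝ) < (a : ℝ) + b + 1 + d := by positivity
      exact this.ne' h
    · exact hab (by exact_mod_cast (sub_eq_zero.1 h).symm)
  · exact h

/-- The mixed energy polynomial. -/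
noncomputable def energyPoly (d j k : ℕ) (p q : MvPolynomial (Fin (d + 1)) ℝ) :
    MvPolynomial (Fin (d + 1)) ℝ :=
  gradProd d p q - MvPolynomial.C ((j : ℝ) * k) * (p * q)

lemma sphI_energy (d j k : ℕ) (hj : 1 ≤ j) (hk : 1 ≤ k) (p q : MvPolynomial (Fin (d + 1)) ℝ)
    (hp : p.IsHomogeneous j) (hq : q.IsHomogeneous k)
    (hΔp : polyLaplacian d p = 0) (hΔ : polyLaplacian d q = 0) :
    sphI d (energyPoly d j k p q)
      = if j = k then ((k : ℝ) * ((k : ℝ) + d - 1)) * sphI d (p * q) else 0 := by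
  obtain ⟨a, rfl⟩ := Nat.exists_eq_add_of_le' hj
  obtain ⟨b, rfl⟩ := Nat.exists_eq_add_of_le' hk
  unfold energyPoly
  rw [sphI_sub, sphI_C_mul, sphI_green d a b p q hp hq hΔ]
  split_ifs with h
  · have : a = b := by omega
    subst this
    push_cast
    ring
  · rw [sphI_orth d a b p q hp hq hΔp hΔ (by omega)]
    simp

lemma energy_totalDegree (d n j k : ℕ) (hj : j ≤ n) (hk : k ≤ n)
    (p q : MvPolynomial (Fin (d + 1)) ℝ)
    (hp : p.IsHomogeneous j) (hq : q.IsHomogeneous k) :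
    (energyPoly d j k p q).totalDegree ≤ 2 * n := by
  unfold energyPoly gradProd
  refine (MvPolynomial.totalDegree_sub _ _).trans (max_le ?_ ?_)
  · refine MvPolynomial.totalDegree_finsetSum_le fun i _ => ?_
    exact ((hp.pderiv (i := i)).mul (hq.pderiv (i := i))).totalDegree_le.trans (by omega)
  · refine (MvPolynomial.totalDegree_mul _ _).trans ?_
    rw [MvPolynomial.totalDegree_C]
    have := (hp.mul hq).totalDegree_le
    omega

lemma sphGrad_eq (d : ℕ) (f : SphFun d) (p : MvPolynomial (Fin (d + 1)) ℝ)
    (hf : ∀ s : Sph d, f s = polyEv d p s) (s : Sph d) :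
    sphGrad d f s = polyGrad d p s - ⟪(s : Euc d), polyGrad d p s⟫ • (s : Euc d) := by
  have hs : ‖(s : Euc d)‖ = 1 := mem_sphere_zero_iff_norm.1 s.2
  have hs0 : (s : Euc d) ≠ 0 := by
    intro h; rw [h, norm_zero] at hs; exact zero_ne_one hs
  have hφ : HasDerivAt (fun t : ℝ => (√t)⁻¹) (-(1 / 2)) (‖(s : Euc d)‖ ^ 2) := by
    have h := (Real.hasDerivAt_sqrt (x := ‖(s : Euc d)‖ ^ 2) (by simp [hs])).inv (by simp [hs])
    convert! h using 1
    simp [hs]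
  have h1 := hφ.comp_hasFDerivAt (s : Euc d) (hasStrictFDerivAt_norm_sq (s : Euc d)).hasFDerivAt
  have h2 := h1.smul (hasFDerivAt_id (s : Euc d))
  have hval : (((fun t : ℝ => (√t)⁻¹) ∘ fun x : Euc d => ‖x‖ ^ 2) (s : Euc d)) • (id (s : Euc d))
      = (s : Euc d) := by simp [hs]
  have h3 : HasFDerivAt (polyEv d p) (innerSL ℝ (polyGrad d p s))
      ((((fun t : ℝ => (√t)⁻¹) ∘ fun x : Euc d => ‖x‖ ^ 2) (s : Euc d)) • (id (s : Euc d))) := by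
    rw [hval]; exact polyEv_hasFDerivAt d p s
  have h4 := HasFDerivAt.comp (f := fun x : Euc d =>
    ((fun t : ℝ => (√t)⁻¹) ∘ fun x : Euc d => ‖x‖ ^ 2) x • id x) (s : Euc d) h3 h2
  refine HasGradientAt.gradient ?_
  rw [hasGradientAt_iff_hasFDerivAt]
  have hE : extendSph d f =ᶠ[nhds (s : Euc d)] (polyEv d p ∘ fun x : Euc d =>
      ((fun t : ℝ => (√t)⁻¹) ∘ fun x : Euc d => ‖x‖ ^ 2) x • id x) := by
    filter_upwards [isOpen_ne.mem_nhds hs0] with y hy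
    simp only [extendSph, dif_neg hy, hf, Function.comp_apply, id]
    rw [Real.sqrt_sq (norm_nonneg _)]
  have hD : HasFDerivAt (polyEv d p ∘ fun x : Euc d =>
      ((fun t : ℝ => (√t)⁻¹) ∘ fun x : Euc d => ‖x‖ ^ 2) x • id x)
      (InnerProductSpace.toDual ℝ (Euc d)
        (polyGrad d p s - ⟪(s : Euc d), polyGrad d p s⟫ • (s : Euc d))) (s : Euc d) := by
    convert! h4 using 1
    ext v
    simp [hs, inner_sub_left, inner_smul_left, inner_add_right, inner_smul_right, real_inner_comm]
    ring
  exact hD.congr_of_eventuallyEq hE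

lemma polyEv_gradProd (d : ℕ) (p q : MvPolynomial (Fin (d + 1)) ℝ) (x : Euc d) :
    polyEv d (gradProd d p q) x = ⟪polyGrad d p x, polyGrad d q x⟫ := by
  simp [gradProd, polyEv, polyGrad, PiLp.inner_apply, mul_comm]

lemma inner_polyGrad (d k : ℕ) (p : MvPolynomial (Fin (d + 1)) ℝ) (hp : p.IsHomogeneous k)
    (x : Euc d) : ⟪x, polyGrad d p x⟫ = k * polyEv d p x := by
  have h := congrArg (fun q => polyEv d q x) hp.sum_X_mul_pderiv
  simp only [polyEv, map_sum, map_mul, MvPolynomial.eval_X, nsmul_eq_mul, map_natCast] at h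
  rw [polyEv, ← h]
  simp [polyGrad, polyEv, PiLp.inner_apply, mul_comm]

lemma polyGrad_sum (d : ℕ) {ι : Type*} (t : Finset ι) (p : ι → MvPolynomial (Fin (d + 1)) ℝ)
    (x : Euc d) : polyGrad d (∑ i ∈ t, p i) x = ∑ i ∈ t, polyGrad d (p i) x := by
  ext i
  simp [polyGrad, polyEv]

lemma normSq_sphGrad (d : ℕ) (f : SphFun d) (t : Finset ℕ)
    (p : ℕ → MvPolynomial (Fin (d + 1)) ℝ) (hp : ∀ j, (p j).IsHomogeneous j)
    (hf : ∀ s : Sph d, f s = polyEv d (∑ j ∈ t, p j) s) (s : Sph d) :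
    ⟪sphGrad d f s, sphGrad d f s⟫ =
      polyEv d (∑ j ∈ t, ∑ k ∈ t, energyPoly d j k (p j) (p k)) s := by
  have hs : ⟪(s : Euc d), (s : Euc d)⟫ = 1 := by
    rw [real_inner_self_eq_norm_sq, mem_sphere_zero_iff_norm.1 s.2, one_pow]
  rw [sphGrad_eq d f _ hf s]
  have h1 : ∀ g : Euc d, ⟪g - ⟪(s : Euc d), g⟫ • (s : Euc d), g - ⟪(s : Euc d), g⟫ • (s : Euc d)⟫
      = ⟪g, g⟫ - ⟪(s : Euc d), g⟫ * ⟪(s : Euc d), g⟫ := by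
    intro g
    simp only [inner_sub_left, inner_sub_right, inner_smul_left, inner_smul_right, hs,
      real_inner_comm g (s : Euc d)]
    simp
    try ring
  rw [h1, polyGrad_sum]
  simp only [inner_sum, sum_inner, inner_polyGrad d _ _ (hp _)]
  rw [Finset.sum_mul_sum]
  have h2 : polyEv d (∑ j ∈ t, ∑ k ∈ t, energyPoly d j k (p j) (p k)) s
      = ∑ j ∈ t, ∑ k ∈ t, (⟪polyGrad d (p j) s, polyGrad d (p k) s⟫
        - (j * polyEv d (p j) s) * (k * polyEv d (p k) s)) := by
    rw [polyEv, map_sum]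
    refine Finset.sum_congr rfl fun j _ => ?_
    rw [map_sum]
    refine Finset.sum_congr rfl fun k _ => ?_
    rw [← polyEv_gradProd]
    simp [energyPoly, polyEv]
    ring
  rw [h2]
  simp only [Finset.sum_sub_distrib]
  rw [Finset.sum_comm]

lemma harmComponent_continuous (d n : ℕ) (P : SphFun d) (k : ℕ) :
    Continuous (harmComponent d n P k) := by
  unfold harmComponent
  split_ifs with h
  · obtain ⟨p, -, -, hp⟩ := h.choose_spec.1 k
    have : h.choose k = fun s : Sph d => polyEv d p s := funext hp
    rw [this]
    exact polyEv_sph_continuous d p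
  · exact continuous_const

lemma innerW_half (d n : ℕ) (P L : SphFun d) :
    innerW d n L P ≤ innerW d n L L + (1 / 4) * innerW d n P P := by
  unfold innerW
  rw [Finset.mul_sum, ← Finset.sum_add_distrib]
  refine Finset.sum_le_sum fun k hk => ?_
  have hk1 : (1 : ℝ) ≤ k := by exact_mod_cast (Finset.mem_Icc.1 hk).1
  have hw : 0 ≤ (k : ℝ) * ((k : ℝ) + d - 1) := by
    have : (0 : ℝ) ≤ d := d.cast_nonneg
    apply mul_nonneg <;> linarith
  have hL := harmComponent_continuous d n L k
  have hP := harmComponent_continuous d n P k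
  have h : ∫ x, harmComponent d n L k x * harmComponent d n P k x ∂muSph d
      ≤ ∫ x, (harmComponent d n L k x * harmComponent d n L k x +
        (1 / 4) * (harmComponent d n P k x * harmComponent d n P k x)) ∂muSph d := by
    refine integral_mono (integrable_of_continuous_sph d _ (hL.mul hP))
      (integrable_of_continuous_sph d _ ((hL.mul hL).add (continuous_const.mul (hP.mul hP)))) fun x => ?_
    simp only
    nlinarith [sq_nonneg (harmComponent d n L k x - (1 / 2) * harmComponent d n P k x)]
  have i1 : Integrable (fun x => harmComponent d n L k x * harmComponent d n L k x) (muSph d) :=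
    integrable_of_continuous_sph d _ (hL.mul hL)
  have i2 : Integrable (fun x => (1 / 4) * (harmComponent d n P k x * harmComponent d n P k x))
      (muSph d) :=
    integrable_of_continuous_sph d _ (continuous_const.mul (hP.mul hP))
  rw [integral_add i1 i2, integral_const_mul] at h
  calc _ ≤ _ := mul_le_mul_of_nonneg_left h hw
    _ = _ := by ring

lemma innerW_self_nonneg (d n : ℕ) (P : SphFun d) : 0 ≤ innerW d n P P := by
  unfold innerW
  refine Finset.sum_nonneg fun k hk => ?_
  have hk1 : (1 : ℝ) ≤ k := by exact_mod_cast (Finset.mem_Icc.1 hk).1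
  have hw : 0 ≤ (k : ℝ) * ((k : ℝ) + d - 1) := by
    have : (0 : ℝ) ≤ d := d.cast_nonneg
    apply mul_nonneg <;> linarith
  exact mul_nonneg hw (integral_nonneg fun x => mul_self_nonneg _)

/-- The key lower bound from the Marcinkiewicz–Zygmund property. -/
lemma innerW_le_discrete (d n N : ℕ) (x : Fin N → Sph d) (hMZ : MZProperty d (2 * n) N x)
    (P : SphFun d) :
    (1 / 2) * innerW d n P P ≤
      (N : ℝ)⁻¹ * ∑ i, ⟪sphGrad d P (x i : Euc d), sphGrad d P (x i : Euc d)⟫ := by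
  by_cases h : ∃ c : ℕ → SphFun d, (∀ j, c j ∈ sphHarmonic d j) ∧ P = ∑ j ∈ Finset.Icc 1 n, c j
  · have hc : ∀ k, harmComponent d n P k = h.choose k := fun k => by
      unfold harmComponent
      rw [dif_pos h]
    have hspec := h.choose_spec
    choose p hp hΔ hev using hspec.1
    have hf : ∀ s : Sph d, P s = polyEv d (∑ j ∈ Finset.Icc 1 n, p j) s := by
      intro s
      conv_lhs => rw [hspec.2]
      rw [Finset.sum_apply, polyEv, map_sum]
      exact Finset.sum_congr rfl fun j _ => hev j s
    have hnorm := normSq_sphGrad d P (Finset.Icc 1 n) p hp hf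
    set q := ∑ j ∈ Finset.Icc 1 n, ∑ k ∈ Finset.Icc 1 n, energyPoly d j k (p j) (p k) with hq
    have hdeg : q.totalDegree ≤ 2 * n := by
      refine MvPolynomial.totalDegree_finsetSum_le fun j hj => ?_
      refine MvPolynomial.totalDegree_finsetSum_le fun k hk => ?_
      exact energy_totalDegree d n j k (Finset.mem_Icc.1 hj).2 (Finset.mem_Icc.1 hk).2 _ _
        (hp j) (hp k)
    have hpos : ∀ s : Sph d, |MvPolynomial.eval (fun j => (s : Euc d) j) q|
        = ⟪sphGrad d P s, sphGrad d P s⟫ := by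
      intro s
      rw [hnorm s]
      refine abs_of_nonneg ?_
      change 0 ≤ polyEv d q s
      rw [← hnorm s]
      exact real_inner_self_nonneg
    have hmz := (hMZ q hdeg).1
    simp only [hpos] at hmz
    refine le_trans (le_of_eq ?_) hmz
    congr 1
    have e1 : ∫ y : Sph d, ⟪sphGrad d P y, sphGrad d P y⟫ ∂muSph d = sphI d q := by
      unfold sphI
      exact integral_congr_ae (Filter.Eventually.of_forall fun s => hnorm s)
    rw [e1, hq, sphI_sum]
    unfold innerW
    refine Finset.sum_congr rfl fun j hj => ?_
    have hj1 := (Finset.mem_Icc.1 hj).1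
    rw [sphI_sum]
    have e2 : ∀ k ∈ Finset.Icc 1 n, sphI d (energyPoly d j k (p j) (p k))
        = if j = k then ((k : ℝ) * ((k : ℝ) + d - 1)) * sphI d (p j * p k) else 0 := fun k hk =>
      sphI_energy d j k hj1 (Finset.mem_Icc.1 hk).1 _ _ (hp j) (hp k) (hΔ j) (hΔ k)
    rw [Finset.sum_congr rfl e2, Finset.sum_ite_eq, if_pos hj]
    congr 1
    unfold sphI
    refine integral_congr_ae (Filter.Eventually.of_forall fun s => ?_)
    simp only [hc, hev, polyEv, map_mul]
  · have h0 : innerW d n P P = 0 := by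
      unfold innerW harmComponent
      simp [dif_neg h]
    rw [h0, mul_zero]
    exact mul_nonneg (by positivity) (Finset.sum_nonneg fun i _ => real_inner_self_nonneg)

/-- If `x_1,…,x_N ∈ S^d` satisfy the Marcinkiewicz–Zygmund property of
degree `2n` and `L'(P) ∈ P_n` satisfies `⟨L'(P), Q⟩_w = (1/N) Σ_i (∇Q(x_i), ∇P(x_i))` for
all `Q ∈ P_n`, then `‖L'(P)‖_w ≥ (1/2)‖P‖_w`. -/
theorem statement14 (d n N : ℕ) (hd : 1 ≤ d) (hn : 1 ≤ n) (hN : 1 ≤ N)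
    (x : Fin N → Sph d) (hMZ : MZProperty d (2 * n) N x)
    (P : SphFun d) (hP : P ∈ PolySph d n)
    (L' : SphFun d) (hL' : L' ∈ PolySph d n)
    (hrepr : ∀ Q ∈ PolySph d n,
      innerW d n L' Q =
        (N : ℝ)⁻¹ * ∑ i, ⟪sphGrad d Q (x i : Euc d), sphGrad d P (x i : Euc d)⟫) :
    (1 / 2) * normW d n P ≤ normW d n L' := by
  have h1 := innerW_le_discrete d n N x hMZ P
  rw [← hrepr P hP] at h1
  have h2 := innerW_half d n P L'
  have h3 := innerW_self_nonneg d n P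
  unfold normW
  refine Real.le_sqrt_of_sq_le ?_
  rw [mul_pow, Real.sq_sqrt h3]
  linarith
end

section
/- For all x, y ∈ S^d, |g_w(1) − g_w((x,y))| ≤ g_w′(1)·‖x − y‖². -/
open MeasureTheory Finset
open scoped RealInnerProductSpace

noncomputable section
attribute [local instance] Classical.propDecidable

end

/-- The Taylor coefficients of `(1 - x)^{-α}`. -/
noncomputable def gcoef (α : ℝ) : ℕ → ℝ
  | 0 => 1
  | i + 1 => (α + i) / (i + 1) * gcoef α i

lemma gcoef_nonneg {α : ℝ} (h : 0 ≤ α) (i : ℕ) : 0 ≤ gcoef α i := by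
  induction i with
  | zero => simp [gcoef]
  | succ i ih => rw [gcoef]; positivity

lemma gcoef_succ (α : ℝ) (i : ℕ) :
    ((i : ℝ) + 1) * gcoef α (i + 1) = (α + i) * gcoef α i := by
  rw [gcoef]; field_simp

lemma gcoefC_succ (α : ℝ) (i : ℕ) :
    ((i : Polynomial ℝ) + 1) * Polynomial.C (gcoef α (i + 1)) =
      (Polynomial.C α + i) * Polynomial.C (gcoef α i) := by
  have h := congrArg Polynomial.C (gcoef_succ α i)
  simpa using h

open Polynomial.Chebyshev in
/-- The Chebyshev expansion. -/
noncomputable def gsum (α : ℝ) (k : ℕ) : Polynomial ℝ :=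
  ∑ p ∈ Finset.HasAntidiagonal.antidiagonal k,
    Polynomial.C (gcoef α p.1) * Polynomial.C (gcoef α p.2) * T ℝ ((p.1 : ℤ) - p.2)

lemma shift_left (α : ℝ) (k : ℕ) (F : ℤ → Polynomial ℝ) :
    ∑ p ∈ Finset.HasAntidiagonal.antidiagonal (k + 1), (p.1 : Polynomial ℝ) *
      (Polynomial.C (gcoef α p.1) * Polynomial.C (gcoef α p.2) * F ((p.1 : ℤ) - p.2)) =
    ∑ p ∈ Finset.HasAntidiagonal.antidiagonal k, (Polynomial.C α + p.1) *
      (Polynomial.C (gcoef α p.1) * Polynomial.C (gcoef α p.2) * F ((p.1 : ℤ) - p.2 + 1)) := by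
  rw [Finset.Nat.sum_antidiagonal_succ]
  simp only [Nat.cast_zero, zero_mul, zero_add]
  refine Finset.sum_congr rfl fun p _ => ?_
  have h := gcoefC_succ α p.1
  have e : (((p.1 + 1 : ℕ) : ℤ) - p.2) = (p.1 : ℤ) - p.2 + 1 := by push_cast; ring
  rw [e]
  push_cast
  linear_combination (Polynomial.C (gcoef α p.2) * F ((p.1 : ℤ) - p.2 + 1)) * h

lemma shift_right (α : ℝ) (k : ℕ) (F : ℤ → Polynomial ℝ) :
    ∑ p ∈ Finset.HasAntidiagonal.antidiagonal (k + 1), (p.2 : Polynomial ℝ) *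
      (Polynomial.C (gcoef α p.1) * Polynomial.C (gcoef α p.2) * F ((p.1 : ℤ) - p.2)) =
    ∑ p ∈ Finset.HasAntidiagonal.antidiagonal k, (Polynomial.C α + p.2) *
      (Polynomial.C (gcoef α p.1) * Polynomial.C (gcoef α p.2) * F ((p.1 : ℤ) - p.2 - 1)) := by
  rw [Finset.Nat.sum_antidiagonal_succ']
  simp only [Nat.cast_zero, zero_mul, zero_add]
  refine Finset.sum_congr rfl fun p _ => ?_
  have h := gcoefC_succ α p.2
  have e : ((p.1 : ℤ) - ((p.2 + 1 : ℕ) : ℤ)) = (p.1 : ℤ) - p.2 - 1 := by push_cast; ring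
  rw [e]
  push_cast
  linear_combination (Polynomial.C (gcoef α p.1) * F ((p.1 : ℤ) - p.2 - 1)) * h

lemma natCast_mul_sum (k : ℕ) (f : ℕ × ℕ → Polynomial ℝ) :
    (k : Polynomial ℝ) * ∑ p ∈ Finset.HasAntidiagonal.antidiagonal k, f p =
      ∑ p ∈ Finset.HasAntidiagonal.antidiagonal k, (p.1 : Polynomial ℝ) * f p +
      ∑ p ∈ Finset.HasAntidiagonal.antidiagonal k, (p.2 : Polynomial ℝ) * f p := by
  rw [← Finset.sum_add_distrib, Finset.mul_sum]
  refine Finset.sum_congr rfl fun p hp => ?_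
  rw [← Finset.HasAntidiagonal.mem_antidiagonal.mp hp]
  push_cast; ring

open Polynomial.Chebyshev in
lemma gsum_rec (α : ℝ) (k : ℕ) :
    ((k : Polynomial ℝ) + 2) * gsum α (k + 2) =
      2 * ((k : Polynomial ℝ) + 1 + Polynomial.C α) * (Polynomial.X * gsum α (k + 1)) -
        ((k : Polynomial ℝ) + 2 * Polynomial.C α) * gsum α k := by
  have h1 : ((k : Polynomial ℝ) + 2) * gsum α (k + 2) =
      ∑ p ∈ Finset.HasAntidiagonal.antidiagonal (k + 1), ((Polynomial.C α + p.1) *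
        (Polynomial.C (gcoef α p.1) * Polynomial.C (gcoef α p.2) * T ℝ ((p.1 : ℤ) - p.2 + 1)) +
        (Polynomial.C α + p.2) *
        (Polynomial.C (gcoef α p.1) * Polynomial.C (gcoef α p.2) * T ℝ ((p.1 : ℤ) - p.2 - 1))) := by
    have := natCast_mul_sum (k + 2) (fun p => Polynomial.C (gcoef α p.1) *
      Polynomial.C (gcoef α p.2) * T ℝ ((p.1 : ℤ) - p.2))
    rw [shift_left α (k + 1), shift_right α (k + 1), ← Finset.sum_add_distrib] at this
    rw [← this, gsum]; push_cast; rfl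
  have h2 : 2 * ((k : Polynomial ℝ) + 1 + Polynomial.C α) * (Polynomial.X * gsum α (k + 1)) =
      ∑ p ∈ Finset.HasAntidiagonal.antidiagonal (k + 1), ((p.1 : Polynomial ℝ) + p.2 + Polynomial.C α) *
        (Polynomial.C (gcoef α p.1) * Polynomial.C (gcoef α p.2) *
          (T ℝ ((p.1 : ℤ) - p.2 + 1) + T ℝ ((p.1 : ℤ) - p.2 - 1))) := by
    rw [gsum, Finset.mul_sum, Finset.mul_sum]
    refine Finset.sum_congr rfl fun p hp => ?_
    have hk : (k : Polynomial ℝ) + 1 = p.1 + p.2 := by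
      exact_mod_cast (Finset.HasAntidiagonal.mem_antidiagonal.mp hp).symm
    rw [hk, T_add_one]; ring
  have h3 : ((k : Polynomial ℝ) + 2 * Polynomial.C α) * gsum α k =
      ∑ p ∈ Finset.HasAntidiagonal.antidiagonal (k + 1), ((p.1 : Polynomial ℝ) *
        (Polynomial.C (gcoef α p.1) * Polynomial.C (gcoef α p.2) * T ℝ ((p.1 : ℤ) - p.2 - 1)) +
        (p.2 : Polynomial ℝ) *
        (Polynomial.C (gcoef α p.1) * Polynomial.C (gcoef α p.2) * T ℝ ((p.1 : ℤ) - p.2 + 1))) := by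
    rw [Finset.sum_add_distrib, shift_left α k (fun m => T ℝ (m - 1)),
      shift_right α k (fun m => T ℝ (m + 1)), ← Finset.sum_add_distrib, gsum, Finset.mul_sum]
    refine Finset.sum_congr rfl fun p hp => ?_
    have hk : (k : Polynomial ℝ) = p.1 + p.2 := by
      exact_mod_cast (Finset.HasAntidiagonal.mem_antidiagonal.mp hp).symm
    rw [hk]
    simp only [add_sub_cancel_right, sub_add_cancel]
    ring
  rw [h1, h2, h3, ← Finset.sum_sub_distrib]
  refine Finset.sum_congr rfl fun p hp => ?_
  ring

lemma gegenbauer_eq_gsum (α : ℝ) : ∀ k, gegenbauer α k = gsum α k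
  | 0 => by simp [gegenbauer, gsum, gcoef]
  | 1 => by
    simp [gegenbauer, gsum, gcoef, Finset.Nat.antidiagonal_succ]
    rw [show (Polynomial.C 2 : Polynomial ℝ) = 2 from rfl]
    ring
  | k + 2 => by
    have h := gsum_rec α k
    rw [gegenbauer, gegenbauer_eq_gsum α (k + 1), gegenbauer_eq_gsum α k]
    have hk : ((k : ℝ) + 2) ≠ 0 := by positivity
    have hC : Polynomial.C ((k : ℝ) + 2) ≠ 0 := Polynomial.C_ne_zero.mpr hk
    have C2 : (Polynomial.C 2 : Polynomial ℝ) = 2 := rfl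
    apply mul_left_cancel₀ hC
    have e1 : Polynomial.C ((k : ℝ) + 2) * Polynomial.C (2 * ((k : ℝ) + 1 + α) / ((k : ℝ) + 2))
        = 2 * ((k : Polynomial ℝ) + 1 + Polynomial.C α) := by
      rw [← Polynomial.C_mul, mul_div_cancel₀ _ hk]; simp [C2]
    have e2 : Polynomial.C ((k : ℝ) + 2) * Polynomial.C (((k : ℝ) + 2 * α) / ((k : ℝ) + 2))
        = (k : Polynomial ℝ) + 2 * Polynomial.C α := by
      rw [← Polynomial.C_mul, mul_div_cancel₀ _ hk]; simp [C2]
    have e3 : Polynomial.C ((k : ℝ) + 2) = (k : Polynomial ℝ) + 2 := by simp [C2]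
    rw [mul_sub, ← mul_assoc, ← mul_assoc (Polynomial.C _) (Polynomial.C _) (gsum α k), e1, e2, e3, h]

lemma abs_sin_nat_mul_le (m : ℕ) (φ : ℝ) : |Real.sin (m * φ)| ≤ m * |Real.sin φ| := by
  induction m with
  | zero => simp
  | succ m ih =>
    have e : ((m + 1 : ℕ) : ℝ) * φ = m * φ + φ := by push_cast; ring
    rw [e, Real.sin_add]
    calc _ ≤ |Real.sin (m * φ)| * |Real.cos φ| + |Real.cos (m * φ)| * |Real.sin φ| := by
          rw [← abs_mul, ← abs_mul]; exact abs_add_le _ _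
      _ ≤ |Real.sin (m * φ)| * 1 + 1 * |Real.sin φ| := by
          gcongr <;> exact Real.abs_cos_le_one _
      _ ≤ _ := by push_cast; linarith

/-- Polynomials with the required inequality at `t`. -/
def GoodAt (t : ℝ) (p : Polynomial ℝ) : Prop :=
  0 ≤ p.eval 1 - p.eval t ∧ p.eval 1 - p.eval t ≤ p.derivative.eval 1 * (1 - t)

lemma GoodAt.sum {ι : Type*} {t : ℝ} (s : Finset ι) (f : ι → Polynomial ℝ)
    (h : ∀ i ∈ s, GoodAt t (f i)) : GoodAt t (∑ i ∈ s, f i) := by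
  simp only [GoodAt, Polynomial.eval_finsetSum, Polynomial.derivative_sum,
    ← Finset.sum_sub_distrib, Finset.sum_mul]
  exact ⟨Finset.sum_nonneg fun i hi => (h i hi).1, Finset.sum_le_sum fun i hi => (h i hi).2⟩

lemma GoodAt.C_mul {t c : ℝ} (hc : 0 ≤ c) {p : Polynomial ℝ} (h : GoodAt t p) :
    GoodAt t (Polynomial.C c * p) := by
  obtain ⟨h1, h2⟩ := h
  simp only [GoodAt, Polynomial.eval_C_mul, Polynomial.derivative_C_mul, ← mul_sub, mul_assoc]
  exact ⟨mul_nonneg hc h1, mul_le_mul_of_nonneg_left h2 hc⟩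

open Polynomial.Chebyshev in
lemma goodAt_T {t : ℝ} (h1 : -1 ≤ t) (h2 : t ≤ 1) (m : ℤ) : GoodAt t (T ℝ m) := by
  have ht : Real.cos (Real.arccos t) = t := Real.cos_arccos h1 h2
  set θ := Real.arccos t
  unfold GoodAt
  rw [derivative_T_eval_one, T_eval_one, ← ht, T_real_cos]
  refine ⟨by linarith [Real.cos_le_one (m * θ)], ?_⟩
  have hm : Real.cos (m * θ) = Real.cos (m.natAbs * θ) := by
    rcases Int.natAbs_eq m with h | h
    · rw [h]; simp
    · rw [h]; simp
  have hm2 : (m : ℝ) ^ 2 = (m.natAbs : ℝ) ^ 2 := by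
    rw [Nat.cast_natAbs, Int.cast_abs, sq_abs]
  have key (x : ℝ) : 1 - Real.cos x = 2 * Real.sin (x / 2) ^ 2 := by
    have h := Real.cos_sq' (x / 2)
    have h' := Real.cos_two_mul (x / 2)
    rw [mul_div_cancel₀ _ two_ne_zero] at h'
    linarith
  rw [hm, hm2, key, key, mul_div_assoc]
  have h := abs_sin_nat_mul_le m.natAbs (θ / 2)
  have h' := mul_self_le_mul_self (abs_nonneg _) h
  rw [abs_mul_abs_self] at h'
  have h'' := abs_mul_abs_self (Real.sin (θ / 2))
  nlinarith

lemma goodAt_gegenbauer {t α : ℝ} (h1 : -1 ≤ t) (h2 : t ≤ 1) (hα : 0 ≤ α) (k : ℕ) :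
    GoodAt t (gegenbauer α k) := by
  rw [gegenbauer_eq_gsum]
  refine GoodAt.sum _ _ fun p _ => ?_
  rw [← Polynomial.C_mul]
  exact GoodAt.C_mul (mul_nonneg (gcoef_nonneg hα _) (gcoef_nonneg hα _)) (goodAt_T h1 h2 _)

lemma gegenbauer_one_nonneg {α : ℝ} (hα : 0 ≤ α) (k : ℕ) : 0 ≤ (gegenbauer α k).eval 1 := by
  rw [gegenbauer_eq_gsum, gsum, Polynomial.eval_finsetSum]
  refine Finset.sum_nonneg fun p _ => ?_
  simpa using mul_nonneg (gcoef_nonneg hα _) (gcoef_nonneg hα _)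

lemma goodAt_gw {t : ℝ} (h1 : -1 ≤ t) (h2 : t ≤ 1) (d n : ℕ) (hd : 1 ≤ d) :
    GoodAt t (gw d n) := by
  have hd' : (1 : ℝ) ≤ d := by exact_mod_cast hd
  have hα : 0 ≤ ((d : ℝ) - 1) / 2 := by linarith
  refine GoodAt.sum _ _ fun k _ => GoodAt.C_mul ?_ (goodAt_gegenbauer h1 h2 hα k)
  have hk : (0 : ℝ) ≤ k := Nat.cast_nonneg k
  have hg := gegenbauer_one_nonneg hα k
  have hkd : (0 : ℝ) ≤ (k : ℝ) + d - 1 := by linarith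
  have hkd2 : (0 : ℝ) ≤ 2 * (k : ℝ) + d - 1 := by linarith
  unfold dimHarm
  positivity

/-- For all `x, y ∈ S^d`, `|g_w(1) − g_w((x,y))| ≤ g_w'(1)·‖x − y‖²`. -/
theorem statement17 (d n : ℕ) (hd : 1 ≤ d) (x y : Sph d) :
    |(gw d n).eval 1 - (gw d n).eval ⟪(x : Euc d), (y : Euc d)⟫| ≤
      (gw d n).derivative.eval 1 * ‖(x : Euc d) - (y : Euc d)‖ ^ 2 := by
  have hx : ‖(x : Euc d)‖ = 1 := by simp
  have hy : ‖(y : Euc d)‖ = 1 := by simp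
  have habs := abs_real_inner_le_norm (x : Euc d) (y : Euc d)
  rw [hx, hy, mul_one] at habs
  obtain ⟨h1, h2⟩ := abs_le.mp habs
  obtain ⟨g1, g2⟩ := goodAt_gw h1 h2 d n hd
  rw [abs_of_nonneg g1, norm_sub_sq_real, hx, hy]
  nlinarith
end
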